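/- arXiv:1809.07982 — 3 statements merged into one kernel-verified Lean document; each statement's English description precedes it below -/
import Mathlib

section
/- Let p ≡ 5 (mod 8) be a prime, t, b positive integers with t² + 4 = b²p, and 𝓕, 𝓛 the associated Lucas sequences. Fix an odd integer m₀, a positive even integer N, and an odd integer n₀. Then the set of squarefree parts s(D_{m₀,n}) of the integers D_{m₀,n} = 𝓛_{m₀}(2𝓕_{m₀} − 𝓕_n𝓛_{m₀})b, as n ranges over all integers with n ≡ n₀ (mod N) and n > 3, is infinite. (Here s(a) denotes the unique squarefree integer such that a = s(a)·A² for some positive integer A.) -/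
theorem aux_zero (t : ℤ) (G : ℤ → ℤ) (h0 : G 0 = 0) (h1 : G 1 = 0)
    (h : ∀ k : ℤ, G (k + 2) = t * G (k + 1) + G k) (k : ℤ) : G k = 0 ∧ G (k + 1) = 0 := by
  induction k using Int.induction_on with
  | zero => simpa using ⟨h0, h1⟩
  | succ i ih =>
    refine ⟨ih.2, ?_⟩
    have := h i
    rw [ih.1, ih.2] at this
    rw [show (i : ℤ) + 1 + 1 = i + 2 by ring, this]; ring
  | pred i ih =>
    have := h (-(i:ℤ) - 1)
    rw [show -(i : ℤ) - 1 + 2 = -i + 1 by ring, show -(i : ℤ) - 1 + 1 = -i by ring, ih.1, ih.2] at this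
    rw [show -(i : ℤ) - 1 + 1 = -i by ring]
    exact ⟨by linarith, ih.1⟩

theorem aux_quad (t : ℤ) (F : ℤ → ℤ) (h0 : F 0 = 0) (h1 : F 1 = 1)
    (h : ∀ k : ℤ, F (k + 2) = t * F (k + 1) + F k) (k : ℤ) :
    F (2*k+1)^2 - t * F (2*k+1) * F (2*k) - F (2*k)^2 = 1 := by
  induction k using Int.induction_on with
  | zero => simp [h0, h1]
  | succ i ih =>
    have a := h (2*i)
    have c := h (2*i+1)
    rw [show 2 * (i:ℤ) + 1 + 1 = 2 * i + 2 by ring] at c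
    rw [show 2 * ((i:ℤ) + 1) + 1 = 2*i+1+2 by ring, show 2 * ((i:ℤ) + 1) = 2*i+2 by ring, c, a]
    linear_combination ih
  | pred i ih =>
    have a := h (2*(-(i:ℤ)-1))
    have c := h (2*(-(i:ℤ)-1)+1)
    rw [show 2*(-(i:ℤ)-1)+1+1 = 2*(-(i:ℤ)-1)+2 by ring] at c
    rw [show 2 * (-(i:ℤ)) + 1 = 2*(-(i:ℤ)-1)+1+2 by ring, show 2 * (-(i:ℤ)) = 2*(-(i:ℤ)-1)+2 by ring, c, a] at ih
    linear_combination ih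

theorem aux_quad_odd (t : ℤ) (F : ℤ → ℤ) (h0 : F 0 = 0) (h1 : F 1 = 1)
    (h : ∀ k : ℤ, F (k + 2) = t * F (k + 1) + F k) (k : ℤ) (hk : Odd k) :
    F (k+1)^2 - t * F (k+1) * F k - F k^2 = -1 := by
  obtain ⟨j, rfl⟩ := hk
  have := aux_quad t F h0 h1 h j
  rw [show 2*j+1+1 = 2*j+2 by ring, h]
  linear_combination -this

theorem aux_add (t : ℤ) (F : ℤ → ℤ) (h0 : F 0 = 0) (h1 : F 1 = 1)
    (h : ∀ k : ℤ, F (k + 2) = t * F (k + 1) + F k) (n M : ℤ) :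
    F (n + M) = F (n+1) * F M + F n * (F (M+1) - t * F M) := by
  have := (aux_zero t (fun M => F (n + M) - (F (n+1) * F M + F n * (F (M+1) - t * F M)))
    (by simp [h0, h1]) (by have := h 0; simp at this; simp [h0, h1, this])
    (fun k => by
      have a := h (n+k)
      have c := h k
      have d := h (k+1)
      rw [show n + (k+2) = n+k+2 by ring, show n+(k+1) = n+k+1 by ring,
        show k+2+1 = k+1+2 by ring, a, d, show k+1+1 = k+2 by ring, c]
      ring) M).1
  linarith

theorem aux_L (t : ℤ) (F L : ℤ → ℤ) (h0 : F 0 = 0) (h1 : F 1 = 1)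
    (h : ∀ k : ℤ, F (k + 2) = t * F (k + 1) + F k)
    (hL0 : L 0 = 2) (hL1 : L 1 = t)
    (hL : ∀ k : ℤ, L (k + 2) = t * L (k + 1) + L k) (k : ℤ) : L k = 2 * F (k+1) - t * F k := by
  have := (aux_zero t (fun M => L M - (2 * F (M+1) - t * F M))
    (by simp [h0, h1, hL0]) (by have := h 0; simp at this; simp [h0, h1, hL1, this]; ring)
    (fun k => by
      have c := h k
      have d := h (k+1)
      rw [hL, show k+2+1 = k+1+2 by ring, d, show k+1+1 = k+2 by ring, c]
      ring) k).1
  linarith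

theorem aux_grow (t : ℤ) (ht : 0 < t) (F : ℤ → ℤ) (h0 : F 0 = 0) (h1 : F 1 = 1)
    (h : ∀ k : ℤ, F (k + 2) = t * F (k + 1) + F k) (k : ℕ) :
    1 ≤ F (k + 1) ∧ (k:ℤ) + 1 ≤ F (k+2) := by
  induction k with
  | zero => have := h 0; simp [h0, h1] at this; simp [h1, this]; omega
  | succ i ih =>
    have := h (i+1)
    rw [show (i:ℤ)+1+1 = i+2 by ring] at this
    push_cast
    rw [show (i:ℤ)+1+1 = i+2 by ring]
    refine ⟨by omega, ?_⟩
    nlinarith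

theorem aux_key (t : ℤ) (F L : ℤ → ℤ) (h0 : F 0 = 0) (h1 : F 1 = 1)
    (h : ∀ k : ℤ, F (k + 2) = t * F (k + 1) + F k)
    (hL0 : L 0 = 2) (hL1 : L 1 = t)
    (hL : ∀ k : ℤ, L (k + 2) = t * L (k + 1) + L k)
    (m n M : ℤ) (hm : Odd m) (hn : Odd n) (hM : Even M) :
    (2 * F m - F (n+M) * L m) * (2 * F m - F (n-M) * L m)
      = (2 * F m - F n * L m + F m * (L M - 2))^2 - 4 * F M ^2 := by
  have qm := aux_quad_odd t F h0 h1 h m hm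
  have qn := aux_quad_odd t F h0 h1 h n hn
  have qM : F (M+1)^2 - t * F (M+1) * F M - F M^2 = 1 := by
    obtain ⟨j, rfl⟩ := hM
    have := aux_quad t F h0 h1 h j
    rwa [two_mul] at this
  have a := aux_add t F h0 h1 h n M
  have c := aux_add t F h0 h1 h (n-M) M
  have d := aux_add t F h0 h1 h (n-M) (M+1)
  rw [sub_add_cancel] at c
  rw [show n - M + (M+1) = n+1 by ring, show M+1+1=M+2 by ring, h M] at d
  have e : F (n-M) = F n * F (M+1) - F (n+1) * F M := by
    rw [c, d]; linear_combination (-F (n-M)) * qM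
  have lm := aux_L t F L h0 h1 h hL0 hL1 hL m
  have lM := aux_L t F L h0 h1 h hL0 hL1 hL M
  have l2 : L m ^2 = (t^2+4) * F m ^2 - 4 := by rw [lm]; linear_combination 4 * qm
  rw [a, e, lM]
  generalize L m = l at *
  generalize F m = v at *
  generalize F n = x at *
  generalize F (n+1) = y at *
  generalize F M = f at *
  generalize F (M+1) = g at *
  have e1 : (y * f + x * (g - t * f)) * (x * g - y * f) = x^2 + f^2 := by
    linear_combination x^2 * qM - f^2 * qn
  have e2 : (2*g-t*f)^2 - 4 = (t^2+4) * f^2 := by linear_combination 4 * qM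
  linear_combination l^2 * e1 - v^2 * e2 + f^2 * l2

theorem aux_sf (a : ℤ) (ha : a ≠ 0) : ∃ d A : ℤ, Squarefree d ∧ 0 < A ∧ a = d * A^2 := by
  obtain ⟨x, y, h, hx⟩ := Nat.sq_mul_squarefree a.natAbs
  have hy : y ≠ 0 := by
    rintro rfl
    simp at h; exact ha (Int.natAbs_eq_zero.1 h.symm)
  refine ⟨a.sign * x, y, ?_, by positivity, ?_⟩
  · rw [← Int.squarefree_natAbs, Int.natAbs_mul, Int.natAbs_sign_of_ne_zero ha]
    simpa using hx
  · conv_lhs => rw [← Int.sign_mul_natAbs a, ← h]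
    push_cast; ring

theorem aux_gap (X Y f : ℤ) (hf : 1 ≤ f) (hX : 4 * f^2 + 1 < |X|) (h : Y^2 = X^2 - 4 * f^2) : False := by
  rw [← sq_abs X, ← sq_abs Y] at h
  have h1 : |Y| < |X| := by
    apply lt_of_pow_lt_pow_left₀ 2 (abs_nonneg _)
    nlinarith
  have := abs_nonneg Y
  nlinarith

theorem stmt_1 (p : ℕ) (hp : p.Prime) (hp8 : p % 8 = 5)
    (t b : ℤ) (ht : 0 < t) (hb : 0 < b)
    (hpt : t ^ 2 + 4 = b ^ 2 * (p : ℤ))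
    (F L : ℤ → ℤ) (hF0 : F 0 = 0) (hF1 : F 1 = 1)
    (hF : ∀ k : ℤ, F (k + 2) = t * F (k + 1) + F k)
    (hL0 : L 0 = 2) (hL1 : L 1 = t)
    (hL : ∀ k : ℤ, L (k + 2) = t * L (k + 1) + L k)
    (m₀ : ℤ) (hm₀ : Odd m₀) (N : ℕ) (hNpos : 0 < N) (hNeven : Even N)
    (n₀ : ℤ) (hn₀ : Odd n₀) :
    {d : ℤ | Squarefree d ∧ ∃ n : ℤ, n ≡ n₀ [ZMOD (N : ℤ)] ∧ 3 < n ∧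
      ∃ A : ℤ, 0 < A ∧ L m₀ * (2 * F m₀ - F n * L m₀) * b = d * A ^ 2}.Infinite := by
  intro hfin
  have hLm : L m₀ ≠ 0 := by
    intro h
    have qm := aux_quad_odd t F hF0 hF1 hF m₀ hm₀
    have lm := aux_L t F L hF0 hF1 hF hL0 hL1 hL m₀
    have l2 : L m₀ ^2 = (t^2+4) * F m₀ ^2 - 4 := by rw [lm]; linear_combination 4 * qm
    rw [h] at l2
    rcases eq_or_ne (F m₀) 0 with h0 | h0
    · rw [h0] at l2; norm_num at l2
    · have : 1 ≤ F m₀ ^ 2 := by have := sq_nonneg (F m₀); have := pow_ne_zero 2 h0; omega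
      nlinarith
  have hLm1 : 1 ≤ |L m₀| := Int.one_le_abs hLm
  have grow : ∀ n : ℤ, 2 ≤ n → n - 1 ≤ F n := by
    intro n hn
    have := (aux_grow t ht F hF0 hF1 hF (n-2).toNat).2
    rw [Int.toNat_of_nonneg (by omega)] at this
    rw [sub_add_cancel] at this; omega
  have big : ∀ (n c : ℤ), 2 ≤ n → n - 1 - |c| ≤ |c - F n * L m₀| := by
    intro n c hn
    have h1 := grow n hn
    have h2 : |F n * L m₀| - |c| ≤ |c - F n * L m₀| := by
      rw [abs_sub_comm]; exact abs_sub_abs_le_abs_sub _ _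
    rw [abs_mul, abs_of_nonneg (by omega : 0 ≤ F n)] at h2
    nlinarith
  set S := hfin.toFinset with hS
  set r := S.card
  -- bounds
  let B : ℕ → ℤ := fun i => |2 * F m₀ + F m₀ * (L (N*i) - 2)| + 4 * F (N*i)^2 + 4
  have hB : ∀ i, 0 ≤ B i := fun i => by positivity
  let C : ℤ := ∑ i ∈ Finset.range (r+1), B i
  have hC : ∀ i ∈ Finset.range (r+1), B i ≤ C :=
    fun i hi => Finset.single_le_sum (fun j _ => hB j) hi
  have hC0 : 0 ≤ C := Finset.sum_nonneg (fun j _ => hB j)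
  let J : ℤ := C + |n₀| + |2 * F m₀| + 10
  let ν : ℕ → ℤ := fun j => n₀ + 2 * N * (J + j)
  have hν : ∀ j, C + |2 * F m₀| + 10 ≤ ν j := by
    intro j
    have h1 : -|n₀| ≤ n₀ := neg_abs_le n₀
    have h2 : (1:ℤ) ≤ N := by exact_mod_cast hNpos
    have h3 : 0 ≤ |n₀| := abs_nonneg _
    have h4 : 0 ≤ |2 * F m₀| := abs_nonneg _
    have h5 : (0:ℤ) ≤ j := by positivity
    simp only [ν, J]
    nlinarith
  have h4 : 0 ≤ |2 * F m₀| := abs_nonneg _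
  have ex : ∀ j, ∃ d A : ℤ, Squarefree d ∧ 0 < A ∧ L m₀ * (2 * F m₀ - F (ν j) * L m₀) * b = d * A^2 := by
    intro j
    apply aux_sf
    refine mul_ne_zero (mul_ne_zero hLm ?_) hb.ne'
    have := big (ν j) (2 * F m₀) (by have := hν j; omega)
    have h := hν j
    intro h0
    rw [h0] at this
    simp only [abs_zero] at this
    omega
  choose d A hd hA hdA using ex
  obtain ⟨i, hi, j, hj, hij, hdd⟩ := Finset.exists_ne_map_eq_of_card_lt_of_maps_to
    (s := Finset.range (r+1)) (t := S) (f := d) (by simp [r]) (by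
      intro j _
      simp only [hS, Finset.mem_coe, Set.Finite.mem_toFinset, Set.mem_ofPred_eq]
      refine ⟨hd j, ν j, ?_, by have := hν j; omega, A j, hA j, hdA j⟩
      simp only [ν]
      refine (Int.modEq_iff_dvd.2 ⟨-(2 * (J + j)), by ring⟩))
  wlog hlt : i < j generalizing i j
  · exact this j hj i hi hij.symm hdd.symm (by omega)
  obtain ⟨k, rfl⟩ := Nat.exists_eq_add_of_lt hlt
  set M : ℤ := N * ((k+1 : ℕ):ℤ) with hM
  set n : ℤ := ν i + M with hn
  have hNe : Even (N:ℤ) := by exact_mod_cast hNeven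
  have hMe : Even M := hNe.mul_right _
  have hνo : Odd (ν i) := by
    simp only [ν]
    exact hn₀.add_even ((hNe.mul_left 2).mul_right _)
  have key := aux_key t F L hF0 hF1 hF hL0 hL1 hL m₀ n M hm₀ (hνo.add_even hMe) hMe
  rw [show n - M = ν i by omega,
    show n + M = ν (i+k+1) by simp only [hn, hM, ν]; push_cast; ring] at key
  have hMpos : 1 ≤ M := by
    rw [hM]; have : 0 < N * (k+1) := by positivity
    exact_mod_cast this
  have hf : 1 ≤ F M := by
    have := (aux_grow t ht F hF0 hF1 hF (M-1).toNat).1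
    rwa [Int.toNat_of_nonneg (by omega), sub_add_cancel] at this
  have hi' := hdA i
  have hj' := hdA (i+k+1)
  rw [← hdd] at hj'
  have hc : L m₀ * b ≠ 0 := mul_ne_zero hLm hb.ne'
  have sq : (L m₀ * b)^2 * ((2 * F m₀ - F (ν (i+k+1)) * L m₀) * (2 * F m₀ - F (ν i) * L m₀))
      = (d i * A i * A (i+k+1))^2 := by
    linear_combination (L m₀ * (2 * F m₀ - F (ν i) * L m₀) * b) * hj' + (d i * A (i+k+1)^2) * hi'
  obtain ⟨Y, hY⟩ : L m₀ * b ∣ d i * A i * A (i+k+1) := by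
    rw [← Int.pow_dvd_pow_iff two_ne_zero]; exact ⟨_, sq.symm⟩
  rw [hY, mul_pow _ Y] at sq
  have sq' := mul_left_cancel₀ (pow_ne_zero 2 hc) sq
  refine aux_gap _ Y (F M) hf ?_ (sq'.symm.trans key)
  have hb1 := hC (k+1) (by simp at hj ⊢; omega)
  simp only [B] at hb1
  rw [← hM] at hb1
  have := big n (2 * F m₀ + F m₀ * (L M - 2)) (by have := hν i; omega)
  rw [show 2 * F m₀ - F n * L m₀ + F m₀ * (L M - 2) = 2 * F m₀ + F m₀ * (L M - 2) - F n * L m₀ by ring]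
  have := hν i
  omega
end

section
/- For every natural number n with n ≡ 3 or n ≡ −3 (mod 500) and n not divisible by 3, the class numbers of both imaginary quadratic fields ℚ(√(2 − F_n)) and ℚ(√(5(2 − F_n))) are divisible by 5. Moreover, the set of pairs of fields (ℚ(√(2 − F_n)), ℚ(√(5(2 − F_n)))), as n ranges over all such natural numbers, is infinite. -/
theorem aux_descent {A B G : Type*} [CommRing A] [CommRing B] [Algebra A B] [Group G] [Fintype G]
    [DecidableEq G]
    [MulSemiringAction G B]
    (hinv : ∀ b : B, (∀ g : G, g • b = b) → ∃ a, algebraMap A B a = b)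
    (hun : ∀ M : Ideal B, M.IsMaximal → ∀ τ : G, τ ≠ 1 → ∃ x : B, x - τ • x ∉ M)
    (I : Ideal B) (hI : ∀ g : G, ∀ x ∈ I, g • x ∈ I) :
    (I.comap (algebraMap A B)).map (algebraMap A B) = I := by
  classical
  -- subring of functions
  let H : Subring (G → B) := Subring.closure
    (Set.range (fun a : B => (fun _ : G => a)) ∪ Set.range (fun b : B => (fun g : G => g • b)))
  have hc : ∀ a : B, (fun _ : G => a) ∈ H := fun a =>
    Subring.subset_closure (Or.inl ⟨a, rfl⟩)
  have hb : ∀ a : B, (fun g : G => g • a) ∈ H := fun a =>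
    Subring.subset_closure (Or.inr ⟨a, rfl⟩)
  -- separating elements
  have hsep : ∀ τ : G, τ ≠ 1 → ∃ h ∈ H, h 1 = 1 ∧ h τ = 0 := by
    intro τ hτ
    have htop : Ideal.span (Set.range (fun x : B => x - τ • x)) = ⊤ := by
      by_contra hne
      obtain ⟨M, hM, hle⟩ := Ideal.exists_le_maximal _ hne
      obtain ⟨x, hx⟩ := hun M hM τ hτ
      exact hx (hle (Ideal.subset_span ⟨x, rfl⟩))
    have h1 : (1 : B) ∈ Ideal.span (Set.range (fun x : B => x - τ • x)) := by
      rw [htop]; trivial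
    have key : ∀ y ∈ Ideal.span (Set.range (fun x : B => x - τ • x)),
        ∃ h ∈ H, h 1 = 0 ∧ h τ = y := by
      intro y hy
      induction hy using Submodule.span_induction with
      | mem x hx =>
        obtain ⟨b, rfl⟩ := hx
        exact ⟨_, H.sub_mem (hc b) (hb b), by simp, by simp⟩
      | zero => exact ⟨0, H.zero_mem, rfl, rfl⟩
      | add x y _ _ hx hy =>
        obtain ⟨h, hh, h1, h2⟩ := hx
        obtain ⟨k, hk, k1, k2⟩ := hy
        exact ⟨h + k, H.add_mem hh hk, by simp [h1, k1], by simp [h2, k2]⟩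
      | smul a x _ hx =>
        obtain ⟨h, hh, h1, h2⟩ := hx
        exact ⟨_, H.mul_mem (hc a) hh, by simp [h1], by simp [h2]⟩
    obtain ⟨h, hh, h1, h2⟩ := key 1 h1
    exact ⟨1 - h, H.sub_mem H.one_mem hh, by simp [h1], by simp [h2]⟩
  have hind : ∃ h ∈ H, h 1 = 1 ∧ ∀ τ : G, τ ≠ 1 → h τ = 0 := by
    choose! f hf using hsep
    refine ⟨∏ τ ∈ Finset.univ.erase (1 : G), f τ, H.prod_mem fun τ hτ => ?_, ?_, ?_⟩
    · exact (hf τ (Finset.ne_of_mem_erase hτ)).1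
    · rw [Finset.prod_apply]
      exact Finset.prod_eq_one fun τ hτ => (hf τ (Finset.ne_of_mem_erase hτ)).2.1
    · intro τ hτ
      rw [Finset.prod_apply]
      exact Finset.prod_eq_zero (Finset.mem_erase.2 ⟨hτ, Finset.mem_univ _⟩) (hf τ hτ).2.2
  -- trace like sums
  have htr1 : ∀ m ∈ I, ∑ g : G, g • m ∈
      (I.comap (algebraMap A B)).map (algebraMap A B) := by
    intro m hm
    obtain ⟨a, ha⟩ := hinv (∑ g : G, g • m) (fun g => by
      rw [Finset.smul_sum]
      simp_rw [smul_smul]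
      exact Fintype.sum_bijective (fun x => g * x) (Group.mulLeft_bijective g) _ _ (fun _ => rfl))
    rw [← ha]
    refine Ideal.mem_map_of_mem _ ?_
    rw [Ideal.mem_comap, ha]
    exact I.sum_mem fun g _ => hI g m hm
  have htr2 : ∀ h ∈ H, ∀ k : G → B, (∀ m ∈ I, ∑ g : G, k g * g • m ∈
      (I.comap (algebraMap A B)).map (algebraMap A B)) → ∀ m ∈ I, ∑ g : G, (h g * k g) * g • m ∈
      (I.comap (algebraMap A B)).map (algebraMap A B) := by
    intro h hh
    induction hh using Subring.closure_induction with
    | mem x hx =>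
      intro k hk m hm
      rcases hx with ⟨a, rfl⟩ | ⟨b, rfl⟩
      · simp only [mul_assoc, ← Finset.mul_sum]
        exact Ideal.mul_mem_left _ _ (hk m hm)
      · have := hk (b * m) (I.mul_mem_left _ hm)
        convert this using 2 with g
        rw [smul_mul']; ring
    | zero => intro k hk m hm; simp
    | one => intro k hk m hm; simpa using hk m hm
    | add x y _ _ hx hy =>
      intro k hk m hm
      simp only [Pi.add_apply, add_mul, Finset.sum_add_distrib]
      exact Ideal.add_mem _ (hx k hk m hm) (hy k hk m hm)
    | neg x _ hx =>
      intro k hk m hm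
      simp only [Pi.neg_apply, neg_mul, Finset.sum_neg_distrib]
      exact neg_mem (hx k hk m hm)
    | mul x y _ _ hx hy =>
      intro k hk m hm
      have := hx (y * k) (fun m hm => hy k hk m hm) m hm
      simpa only [Pi.mul_apply, mul_assoc] using this
  have htr : ∀ h ∈ H, ∀ m ∈ I, ∑ g : G, h g * g • m ∈
      (I.comap (algebraMap A B)).map (algebraMap A B) := by
    intro h hh m hm
    have := htr2 h hh 1 (fun m hm => by simpa using htr1 m hm) m hm
    simpa using this
  obtain ⟨h, hh, h1, h2⟩ := hind
  refine le_antisymm Ideal.map_comap_le fun m hm => ?_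
  have := htr h hh m hm
  rw [Finset.sum_eq_single 1] at this
  · simpa [h1] using this
  · intro τ _ hτ; simp [h2 τ hτ]
  · simp
open NumberField

theorem aux_div5 {E : Type*} [CommGroup E] (σ : E →* E) (h5 : ∀ x, σ (σ (σ (σ (σ x)))) = x)
    (m : ℕ) (hm : Nat.Coprime m 5) (h : ∀ u, ∃ ε, u ^ m = ε / σ ε) (u : E) : ∃ v, u = v ^ 5 := by
  let δ : E →* E := (MonoidHom.id E) / σ
  have hδ : ∀ x, δ x = x / σ x := fun x => rfl
  have key : ∀ j : ℕ, ∀ u : E, ∃ ε, u ^ (m ^ j) = δ^[j] ε := by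
    intro j
    induction j with
    | zero => intro u; exact ⟨u, by simp⟩
    | succ j ih =>
      intro u
      obtain ⟨ε, hε⟩ := h u
      obtain ⟨ε', hε'⟩ := ih ε
      refine ⟨ε', ?_⟩
      rw [pow_succ', pow_mul, hε, Function.iterate_succ', Function.comp, ← hε', map_pow, hδ]
  obtain ⟨ε, hε⟩ := key 5 u
  have h6 : ∃ w, u ^ (m ^ 5) = w ^ 5 := by
    refine ⟨(σ ε)⁻¹ * (σ (σ ε)) ^ 2 * ((σ (σ (σ ε)))⁻¹) ^ 2 * σ (σ (σ (σ ε))), ?_⟩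
    rw [hε]
    simp only [Function.iterate_succ, Function.iterate_zero, Function.comp, hδ, map_div, h5, id]
    generalize σ ε = a
    generalize σ a = b
    generalize σ b = c
    generalize σ c = d
    rw [← toMul_ofMul ε, ← toMul_ofMul a, ← toMul_ofMul b, ← toMul_ofMul c, ← toMul_ofMul d]
    generalize Additive.ofMul ε = ε
    generalize Additive.ofMul a = a
    generalize Additive.ofMul b = b
    generalize Additive.ofMul c = c
    generalize Additive.ofMul d = d
    simp only [← toMul_sub, ← toMul_add, ← toMul_neg, ← toMul_nsmul]
    congr 1
    module
  obtain ⟨w, hw⟩ := h6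
  have hc : Nat.Coprime (m ^ 5) 5 := Nat.Coprime.pow_left 5 hm
  have hb := Nat.gcd_eq_gcd_ab (m ^ 5) 5
  rw [hc] at hb
  refine ⟨w ^ (Nat.gcdA (m ^ 5) 5) * u ^ (Nat.gcdB (m ^ 5) 5), ?_⟩
  calc u = u ^ (1 : ℤ) := (zpow_one u).symm
    _ = u ^ (((m ^ 5 : ℕ) : ℤ) * (m ^ 5).gcdA 5 + ((5 : ℕ) : ℤ) * (m ^ 5).gcdB 5) := by
      rw [← hb]; rfl
    _ = (w ^ 5) ^ ((m ^ 5).gcdA 5) * (u ^ (m ^ 5).gcdB 5) ^ 5 := by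
      rw [zpow_add, zpow_mul, zpow_natCast, hw, mul_comm ((5 : ℕ) : ℤ), zpow_mul _ _ ((5 : ℕ) : ℤ),
        zpow_natCast]
    _ = _ := by
      rw [mul_pow]; congr 1
      rw [← zpow_natCast, ← zpow_natCast, ← zpow_mul, ← zpow_mul, mul_comm]

theorem aux_fg {M : Type*} [AddCommGroup M] [Module.Finite ℤ M] (h : ∀ x : M, ∃ y, x = 5 • y) :
    Module.finrank ℤ M = 0 := by
  obtain ⟨r, hr, hr'⟩ := Submodule.exists_sub_one_mem_and_smul_eq_zero_of_fg_of_le_smul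
    (Ideal.span {(5 : ℤ)}) (⊤ : Submodule ℤ M) Module.Finite.fg_top (fun x _ => by
      obtain ⟨y, rfl⟩ := h x
      rw [← natCast_zsmul]
      exact Submodule.smul_mem_smul (Ideal.mem_span_singleton_self _) trivial)
  rw [Module.finrank_eq_zero_iff]
  intro x
  refine ⟨r, ?_, hr' x trivial⟩
  rintro rfl
  rw [Ideal.mem_span_singleton] at hr
  omega

theorem aux_rank (L : Type*) [Field L] [NumberField L] (h : 3 ≤ Module.finrank ℚ L) :
    ∃ u : (𝓞 L)ˣ, ∀ v, u ≠ v ^ 5 := by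
  by_contra! hh
  have hr : 0 < Units.rank L := by
    have h1 := InfinitePlace.card_add_two_mul_card_eq_rank L
    have h2 := InfinitePlace.card_eq_nrRealPlaces_add_nrComplexPlaces (K := L)
    unfold Units.rank
    omega
  have h1 := aux_fg (M := Additive (𝓞 L)ˣ) (fun x => by
    obtain ⟨v, hv⟩ := hh (Additive.toMul x)
    refine ⟨Additive.ofMul v, ?_⟩
    rw [← ofMul_pow, ← hv, ofMul_toMul])
  rw [Units.finrank_eq] at h1
  omega


theorem aux_class (K L : Type) [Field K] [NumberField K] [Field L] [NumberField L] [Algebra K L]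
    [IsGalois K L] (h5 : Module.finrank K L = 5) (m : ℕ) (hm : Nat.Coprime m 5)
    (hu : ∀ u : (𝓞 K)ˣ, u ^ m = 1)
    (hun : ∀ M : Ideal (𝓞 L), M.IsMaximal → ∀ τ : L ≃ₐ[K] L, τ ≠ 1 → ∃ x : 𝓞 L, x - τ • x ∉ M) :
    5 ∣ Nat.card (ClassGroup (𝓞 K)) := by
  classical
  have hcard : Nat.card (L ≃ₐ[K] L) = 5 := by rw [IsGalois.card_aut_eq_finrank, h5]
  have : Fact (Nat.Prime 5) := ⟨by norm_num⟩
  have : IsCyclic (L ≃ₐ[K] L) := isCyclic_of_prime_card hcard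
  obtain ⟨σ, hσ⟩ := IsCyclic.exists_generator (α := L ≃ₐ[K] L)
  have hσ5 : σ ^ 5 = 1 := by rw [← hcard]; exact pow_card_eq_one'
  let φ : (𝓞 L)ˣ →* (𝓞 L)ˣ := Units.map (MulSemiringAction.toRingHom (L ≃ₐ[K] L) (𝓞 L) σ)
  have hφ : ∀ u, ((φ u : (𝓞 L)ˣ) : 𝓞 L) = σ • (u : 𝓞 L) := fun u => rfl
  have hφ5 : ∀ x, φ (φ (φ (φ (φ x)))) = x := by
    intro x
    ext1
    simp only [hφ, smul_smul]
    have : σ * σ * σ * σ * σ = 1 := by rw [← hσ5]; simp only [pow_succ, pow_zero, one_mul]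
    first
    | rw [this, one_smul]
    | (simp only [← mul_assoc]; rw [this, one_smul])
  have hdeg : 3 ≤ Module.finrank ℚ L := by
    rw [← Module.finrank_mul_finrank ℚ K L, h5]
    have := Module.finrank_pos (R := ℚ) (M := K)
    omega
  obtain ⟨u, hu5⟩ := aux_rank L hdeg
  by_contra hnd
  obtain ⟨v, hv⟩ := aux_div5 φ hφ5 m hm (by
    intro w
    -- norm one
    have hn : Algebra.norm K (algebraMap (𝓞 L) L ((w ^ m : (𝓞 L)ˣ) : 𝓞 L)) = 1 := by
      have h1 := hu (Units.map (RingOfIntegers.norm K : 𝓞 L →* 𝓞 K) w)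
      have h2 := congrArg (fun z : (𝓞 K)ˣ => algebraMap (𝓞 K) K (z : 𝓞 K)) h1
      simp only [Units.val_pow_eq_pow_val, map_pow, Units.val_one, map_one, Units.coe_map] at h2 ⊢
      exact h2
    obtain ⟨α, hα0, hα⟩ := groupCohomology.exists_mul_galRestrict_of_norm_eq_one
      (A := 𝓞 K) (B := 𝓞 L) hσ hn
    have hα' : ((w ^ m : (𝓞 L)ˣ) : 𝓞 L) * (σ • α) = α := by
      apply RingOfIntegers.ext
      have h1 := congrArg (algebraMap (𝓞 L) L) hα
      rw [map_mul, algebraMap_galRestrict_apply] at h1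
      exact h1
    -- the ideal is invariant
    have hinv1 : ∀ x ∈ Ideal.span {α}, σ • x ∈ Ideal.span {α} := by
      intro x hx
      rw [Ideal.mem_span_singleton] at hx ⊢
      obtain ⟨y, rfl⟩ := hx
      rw [smul_mul']
      have h1 : α ∣ σ • α := by
        refine ⟨((w ^ m)⁻¹ : (𝓞 L)ˣ), ?_⟩
        rw [mul_comm, Units.eq_inv_mul_iff_mul_eq, hα']
      exact h1.mul_right _
    have hinv : ∀ τ : L ≃ₐ[K] L, ∀ x ∈ Ideal.span {α}, τ • x ∈ Ideal.span {α} := by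
      intro τ
      obtain ⟨k, hk⟩ := (mem_powers_iff_mem_zpowers (x := σ) (y := τ)).2 (hσ τ)
      rw [← hk]
      clear hk
      induction k with
      | zero => intro x hx; simpa using hx
      | succ k ih =>
        intro x hx
        show σ ^ (k+1) • x ∈ _
        rw [pow_succ, mul_smul]
        exact ih _ (hinv1 x hx)
    have hd := aux_descent (A := 𝓞 K) (B := 𝓞 L) (G := L ≃ₐ[K] L) (by
      intro b hb
      have h1 : (b : L) ∈ Set.range (algebraMap K L) := by
        rw [IsGalois.mem_range_algebraMap_iff_fixed]
        intro f
        exact congrArg (fun z : 𝓞 L => (z : L)) (hb f)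
      obtain ⟨a, ha⟩ := h1
      have hai : IsIntegral ℤ a := by
        rw [← isIntegral_algebraMap_iff (algebraMap K L).injective, ha]
        exact b.2
      refine ⟨⟨a, hai⟩, ?_⟩
      apply RingOfIntegers.ext
      exact ha) hun (Ideal.span {α}) hinv
    set I := (Ideal.span {α}).comap (algebraMap (𝓞 K) (𝓞 L)) with hI
    have hI0 : I ≠ ⊥ := by
      intro h
      rw [h, Ideal.map_bot] at hd
      exact hα0 (Ideal.span_singleton_eq_bot.1 hd.symm)
    have hpow : I ^ 5 = Ideal.span {Algebra.intNorm (𝓞 K) (𝓞 L) α} := by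
      have h1 := Ideal.relNorm_algebraMap (R := 𝓞 K) (𝓞 L) I
      have h2 : Module.finrank (𝓞 K) (𝓞 L) = 5 := by
        rw [← h5]
        exact (IsFractionRing.finrank_eq (𝓞 K) K (𝓞 L) L).symm
      rw [hd, Ideal.relNorm_singleton, h2] at h1
      exact h1.symm
    have hprin : I.IsPrincipal := by
      rw [← ClassGroup.mk0_eq_one_iff (mem_nonZeroDivisors_of_ne_zero hI0)]
      rw [← orderOf_eq_one_iff]
      have h1 : orderOf (ClassGroup.mk0 ⟨I, mem_nonZeroDivisors_of_ne_zero hI0⟩) ∣ 5 := by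
        apply orderOf_dvd_of_pow_eq_one
        rw [← map_pow]
        rw [show (⟨I, mem_nonZeroDivisors_of_ne_zero hI0⟩ : nonZeroDivisors (Ideal (𝓞 K))) ^ 5 =
          ⟨I ^ 5, mem_nonZeroDivisors_of_ne_zero (pow_ne_zero 5 hI0)⟩ from rfl,
          ClassGroup.mk0_eq_one_iff, hpow]
        exact ⟨_, rfl⟩
      rcases (Nat.dvd_prime (by norm_num)).1 h1 with h | h
      · exact h
      · exact absurd (h ▸ orderOf_dvd_natCard _) hnd
    obtain ⟨a, ha⟩ := hprin
    rw [ha, Ideal.submodule_span_eq, Ideal.map_span, Set.image_singleton,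
      Ideal.span_singleton_eq_span_singleton] at hd
    obtain ⟨ε, hε⟩ := hd
    refine ⟨ε, ?_⟩
    rw [eq_div_iff_mul_eq']
    ext1
    rw [Units.val_mul, hφ]
    have ha0 : algebraMap (𝓞 K) (𝓞 L) a ≠ 0 := by
      intro h; rw [h, zero_mul] at hε; exact hα0 hε.symm
    apply mul_left_cancel₀ ha0
    have hfix : σ • (algebraMap (𝓞 K) (𝓞 L) a) = algebraMap (𝓞 K) (𝓞 L) a := by
      apply RingOfIntegers.ext
      exact σ.commutes (a : K)
    rw [← hε, smul_mul', hfix] at hα'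
    rw [← hα']; ring) u
  exact hu5 v hv


theorem aux_units (K : Type) [Field K] [NumberField K] (h2 : Module.finrank ℚ K = 2)
    (w : K) (d : ℤ) (hd : d < 0) (hw : w ^ 2 = (d : K)) :
    ∃ m : ℕ, Nat.Coprime m 5 ∧ ∀ u : (𝓞 K)ˣ, u ^ m = 1 := by
  classical
  have hr : InfinitePlace.nrRealPlaces K = 0 := by
    rw [InfinitePlace.nrRealPlaces, Fintype.card_eq_zero_iff]
    refine ⟨fun ⟨v, hv⟩ => ?_⟩
    have h1 := congrArg (InfinitePlace.embedding_of_isReal hv) hw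
    rw [map_pow, map_intCast] at h1
    have h3 : ((d : ℤ) : ℝ) < 0 := by exact_mod_cast hd
    nlinarith [sq_nonneg (InfinitePlace.embedding_of_isReal hv w)]
  have hrank : Units.rank K = 0 := by
    have h1 := InfinitePlace.card_add_two_mul_card_eq_rank K
    have h2 := InfinitePlace.card_eq_nrRealPlaces_add_nrComplexPlaces (K := K)
    unfold Units.rank
    omega
  refine ⟨Units.torsionOrder K, ?_, ?_⟩
  · by_contra hnc
    have h5 : 5 ∣ Units.torsionOrder K := by
      by_contra h
      exact hnc (((Nat.Prime.coprime_iff_not_dvd (by norm_num)).2 h).symm)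
    have : Fact (Nat.Prime 5) := ⟨by norm_num⟩
    rw [Units.torsionOrder] at h5
    obtain ⟨x, hx⟩ := exists_prime_orderOf_dvd_card' (G := Units.torsion K) 5 h5
    have hp : IsPrimitiveRoot x 5 := by rw [← hx]; exact IsPrimitiveRoot.orderOf x
    have hp2 : IsPrimitiveRoot (((x : (𝓞 K)ˣ) : 𝓞 K) : K) 5 := by
      have := hp.map_of_injective (f := ((algebraMap (𝓞 K) K : 𝓞 K →* K).comp
        (Units.coeHom (𝓞 K))).comp (Units.torsion K).subtype) (by
          intro a b hab
          apply Subtype.ext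
          apply Units.ext
          exact RingOfIntegers.ext hab)
      exact this
    have h1 := hp2.totient_le_degree_minpoly
    have h3 : (minpoly ℤ (((x : (𝓞 K)ˣ) : 𝓞 K) : K)).natDegree = 
      (minpoly ℚ (((x : (𝓞 K)ˣ) : 𝓞 K) : K)).natDegree := by
      rw [minpoly.isIntegrallyClosed_eq_field_fractions' ℚ (hp2.isIntegral (by norm_num))]
      rw [(minpoly.monic (hp2.isIntegral (by norm_num))).natDegree_map]
    have h4 := minpoly.natDegree_le (A := ℚ) (((x : (𝓞 K)ˣ) : 𝓞 K) : K)
    have h6 : Nat.totient 5 = 4 := by decide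
    omega
  · intro u
    obtain ⟨⟨ζ, e⟩, h1, -⟩ := Units.exist_unique_eq_mul_prod K u
    have hz : u = ζ := by
      have h7 : IsEmpty (Fin (Units.rank K)) := by rw [hrank]; infer_instance
      simpa [Finset.univ_eq_empty] using h1
    rw [hz, Units.torsionOrder, ← Subgroup.coe_pow, pow_card_eq_one']
    rfl


open Polynomial in
theorem aux_exL0 (K : Type) [Field K] (q : K[X]) (hq : Irreducible q) :
    ∃ (L : Type) (_ : Field L) (_ : Algebra K L)
      (_ : FiniteDimensional K L) (z : L), aeval z q = 0 ∧ Module.finrank K L = q.natDegree ∧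
      IntermediateField.adjoin K {z} = ⊤ := by
  have : Fact (Irreducible q) := ⟨hq⟩
  refine ⟨AdjoinRoot q, inferInstance, inferInstance, ?_, AdjoinRoot.root q, ?_, ?_, ?_⟩
  · exact (AdjoinRoot.powerBasis hq.ne_zero).finite
  · rw [AdjoinRoot.aeval_eq, AdjoinRoot.mk_self]
  · rw [(AdjoinRoot.powerBasis hq.ne_zero).finrank, AdjoinRoot.powerBasis_dim]
  · exact IntermediateField.adjoin_root_eq_top q

open Polynomial in
theorem aux_exL (K : Type) [Field K] [NumberField K] (h2 : Module.finrank ℚ K = 2)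
    (F : ℚ[X]) (hF : F.Monic) (hdeg : F.natDegree = 5) (hirr : Irreducible F) :
    ∃ (L : Type) (_ : Field L) (_ : NumberField L) (_ : Algebra K L) (z : L),
      aeval z F = 0 ∧ Module.finrank K L = 5 ∧ IntermediateField.adjoin K {z} = ⊤ ∧
      minpoly K z = F.map (algebraMap ℚ K) ∧ minpoly ℚ z = F := by
  have hne : F.map (algebraMap ℚ K) ≠ 0 := (hF.map _).ne_zero
  have hnu : ¬ IsUnit (F.map (algebraMap ℚ K)) := by
    apply not_isUnit_of_natDegree_pos
    rw [natDegree_map, hdeg]; norm_num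
  obtain ⟨q, hq, hqd⟩ := WfDvdMonoid.exists_irreducible_factor hnu hne
  obtain ⟨L, iF, iA, hfin, z, hz, hfr, htop⟩ := aux_exL0 K q hq
  have : CharZero L := charZero_of_injective_algebraMap (algebraMap K L).injective
  have : FiniteDimensional ℚ L := FiniteDimensional.trans ℚ K L
  have iN : NumberField L := ⟨⟩
  have hzF : aeval z F = 0 := by
    have h1 : aeval z (F.map (algebraMap ℚ K)) = 0 := by
      obtain ⟨r, hr⟩ := hqd
      rw [hr, map_mul, hz, zero_mul]
    rwa [aeval_map_algebraMap] at h1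
  have hmin : minpoly ℚ z = F := (minpoly.eq_of_irreducible_of_monic hirr hzF hF).symm
  have hle : q.natDegree ≤ 5 := by
    have := natDegree_le_of_dvd hqd hne
    rwa [natDegree_map, hdeg] at this
  have h5 : 5 ∣ Module.finrank ℚ L := by
    have h1 := IntermediateField.adjoin.finrank (K := ℚ) (x := z) (Algebra.IsIntegral.isIntegral z)
    rw [hmin, hdeg] at h1
    rw [← h1]
    exact Dvd.intro _ (Module.finrank_mul_finrank ℚ (IntermediateField.adjoin ℚ {z}) L)
  rw [← Module.finrank_mul_finrank ℚ K L, h2, hfr] at h5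
  have hq5 : q.natDegree = 5 := by
    have := hq.natDegree_pos
    omega
  refine ⟨L, iF, iN, iA, z, hzF, by rw [hfr, hq5], htop, ?_, hmin⟩
  have h1 : aeval z (F.map (algebraMap ℚ K)) = 0 := by rwa [aeval_map_algebraMap]
  have h3 := IntermediateField.adjoin.finrank (K := K) (x := z) (Algebra.IsIntegral.isIntegral z)
  rw [htop, IntermediateField.finrank_top', hfr, hq5] at h3
  exact Eq.symm <| eq_of_monic_of_dvd_of_natDegree_le (minpoly.monic (Algebra.IsIntegral.isIntegral z)) (hF.map _)
    (minpoly.dvd _ _ h1) (by rw [natDegree_map, hdeg, h3])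

theorem aux_gal (K L : Type) [Field K] [Field L] [Algebra K L] [FiniteDimensional K L] [CharZero K]
    (h5 : Module.finrank K L = 5) (z z' : L) (htop : IntermediateField.adjoin K {z} = ⊤)
    (hne : z' ≠ z) (hz' : Polynomial.aeval z' (minpoly K z) = 0) : IsGalois K L := by
  let pb := IntermediateField.adjoin.powerBasis (Algebra.IsIntegral.isIntegral (R := K) z)
  let e : IntermediateField.adjoin K {z} ≃ₐ[K] L :=
    (IntermediateField.equivOfEq htop).trans IntermediateField.topEquiv
  let pb' := pb.map e
  have hgen : pb'.gen = z := rfl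
  let φ : L →ₐ[K] L := pb'.lift z' (by rw [hgen]; exact hz')
  have hφ : φ z = z' := by
    have := pb'.lift_gen z' (by rw [hgen]; exact hz')
    exact this
  let σ : L ≃ₐ[K] L := AlgEquiv.ofBijective φ (Algebra.IsAlgebraic.algHom_bijective φ)
  have hσ : σ ≠ 1 := by
    intro h
    apply hne
    rw [← hφ]
    exact congrArg (fun s : L ≃ₐ[K] L => s z) h
  have h1 := IntermediateField.finrank_fixedField_eq_card (⊤ : Subgroup (L ≃ₐ[K] L))
  rw [Subgroup.card_top] at h1
  have h2 : 1 < Nat.card (L ≃ₐ[K] L) := by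
    have : Nontrivial (L ≃ₐ[K] L) := ⟨σ, 1, hσ⟩
    exact Finite.one_lt_card
  have h3 : Nat.card (L ≃ₐ[K] L) ∣ 5 := by
    rw [← h1, ← h5]
    exact Dvd.intro_left _ (Module.finrank_mul_finrank K _ L)
  apply IsGalois.of_card_aut_eq_finrank
  rw [h5]
  rcases (Nat.dvd_prime (by norm_num)).1 h3 with h | h
  · omega
  · exact h


theorem aux_autext (K L : Type) [Field K] [Field L] [Algebra K L] [FiniteDimensional K L]
    (z : L) (htop : IntermediateField.adjoin K {z} = ⊤) (ρ ρ' : L ≃ₐ[K] L) (h : ρ z = ρ' z) :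
    ρ = ρ' := by
  let pb := IntermediateField.adjoin.powerBasis (Algebra.IsIntegral.isIntegral (R := K) z)
  let e : IntermediateField.adjoin K {z} ≃ₐ[K] L :=
    (IntermediateField.equivOfEq htop).trans IntermediateField.topEquiv
  let pb' := pb.map e
  have h1 : (ρ : L →ₐ[K] L) = (ρ' : L →ₐ[K] L) := pb'.algHom_ext h
  exact AlgEquiv.coe_toAlgHom_injective h1

open Polynomial in
theorem aux_unram (K L : Type) [Field K] [NumberField K] [Field L] [NumberField L] [Algebra K L]
    [IsGalois K L] (h5 : Module.finrank K L = 5) (z : L)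
    (htop : IntermediateField.adjoin K {z} = ⊤) (F : ℤ[X]) (hF : F.Monic) (hdeg : F.natDegree = 5)
    (h4 : F.coeff 4 = -1) (h3 : F.coeff 3 = 0) (h2 : Odd (F.coeff 2)) (hz : aeval z F = 0)
    (M : Ideal (𝓞 L)) (hM : M.IsMaximal) (τ : L ≃ₐ[K] L) (hτ : τ ≠ 1) :
    ∃ x : 𝓞 L, x - τ • x ∉ M := by
  classical
  by_contra! hcon
  have hcard : Nat.card (L ≃ₐ[K] L) = 5 := by rw [IsGalois.card_aut_eq_finrank, h5]
  have : Fact (Nat.Prime 5) := ⟨by norm_num⟩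
  have hall : ∀ ρ : L ≃ₐ[K] L, ∀ x : 𝓞 L, x - ρ • x ∈ M := by
    intro ρ
    have hm : ρ ∈ Subgroup.zpowers τ := mem_zpowers_of_prime_card hcard hτ
    obtain ⟨k, hk⟩ := (mem_powers_iff_mem_zpowers (x := τ) (y := ρ)).2 hm
    rw [← hk]
    clear hk
    show ∀ x : 𝓞 L, x - τ ^ k • x ∈ M
    induction k with
    | zero => intro x; simp
    | succ k ih =>
      intro x
      have := M.add_mem (ih x) (hcon (τ ^ k • x))
      rwa [sub_add_sub_cancel, smul_smul, ← pow_succ'] at this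
  let ζ : 𝓞 L := ⟨z, ⟨F, hF, by rwa [aeval_def] at hz⟩⟩
  have hprodL : ∏ ρ : L ≃ₐ[K] L, (X - C (ρ z)) = F.map (algebraMap ℤ L) := by
    symm
    apply eq_of_monic_of_dvd_of_natDegree_le
    · exact monic_prod_of_monic _ _ (fun i _ => monic_X_sub_C _)
    · exact hF.map _
    · apply Finset.prod_dvd_of_coprime
      · intro a _ b _ hab
        apply pairwise_coprime_X_sub_C (s := fun ρ : L ≃ₐ[K] L => ρ z) _ hab
        intro ρ ρ' h
        exact aux_autext K L z htop ρ ρ' h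
      · intro ρ _
        rw [dvd_iff_isRoot, IsRoot, eval_map_algebraMap]
        have := congrArg ρ hz
        rw [map_zero] at this
        rw [← this]
        exact (aeval_algHom_apply (ρ.toAlgHom.restrictScalars ℤ) z F).symm ▸ rfl
    · rw [natDegree_prod_of_monic _ _ (fun i _ => monic_X_sub_C _)]
      simp only [natDegree_X_sub_C, Finset.sum_const, Finset.card_univ, smul_eq_mul, mul_one]
      rw [hF.natDegree_map, hdeg, ← Nat.card_eq_fintype_card, hcard]
  have hprod : ∏ ρ : L ≃ₐ[K] L, (X - C (ρ • ζ)) = F.map (algebraMap ℤ (𝓞 L)) := by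
    apply Polynomial.map_injective (algebraMap (𝓞 L) L) RingOfIntegers.coe_injective
    rw [Polynomial.map_prod, Polynomial.map_map, ← IsScalarTower.algebraMap_eq, ← hprodL]
    apply Finset.prod_congr rfl
    intro ρ _
    rw [Polynomial.map_sub, map_X, map_C]
    rfl
  have hq := congrArg (Polynomial.map (Ideal.Quotient.mk M)) hprod
  rw [Polynomial.map_prod, Polynomial.map_map] at hq
  set t := Ideal.Quotient.mk M ζ with ht
  have hq2 : (X - C t) ^ 5 = F.map (Int.castRingHom (𝓞 L ⧸ M)) := by
    rw [RingHom.ext_int (Int.castRingHom (𝓞 L ⧸ M)) ((Ideal.Quotient.mk M).comp (algebraMap ℤ (𝓞 L))), ← hq]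
    have : ∀ ρ ∈ (Finset.univ : Finset (L ≃ₐ[K] L)), Polynomial.map (Ideal.Quotient.mk M) (X - C (ρ • ζ)) = X - C t := by
      intro ρ _
      rw [Polynomial.map_sub, map_X, map_C]
      congr 2
      exact ((Ideal.Quotient.mk_eq_mk_iff_sub_mem _ _).2 (hall ρ ζ)).symm
    rw [Finset.prod_congr rfl this, Finset.prod_const, Finset.card_univ,
      ← Nat.card_eq_fintype_card, hcard]
  have hexp : (X - C t) ^ 5 = X ^ 5 - C (5 * t) * X ^ 4 + C (10 * t ^ 2) * X ^ 3
      - C (10 * t ^ 3) * X ^ 2 + C (5 * t ^ 4) * X - C (t ^ 5) := by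
    simp only [C_mul, C_pow]
    simp only [map_ofNat]
    ring
  rw [hexp] at hq2
  have e4 := congrArg (fun p => coeff p 4) hq2
  have e3 := congrArg (fun p => coeff p 3) hq2
  have e2 := congrArg (fun p => coeff p 2) hq2
  simp only [coeff_sub, coeff_add, coeff_X_pow, coeff_C_mul, coeff_C, coeff_X, coeff_map, h4, h3] at e4 e3 e2
  norm_num at e4 e3 e2
  obtain ⟨k, hk⟩ := h2
  have : Nontrivial (𝓞 L ⧸ M) := Ideal.Quotient.nontrivial_iff.2 hM.ne_top
  rw [hk] at e2
  push_cast at e2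
  have h20 : (2 : 𝓞 L ⧸ M) = 0 := by
    rcases e3 with h | h
    · linear_combination -2 * e4 + t * h
    · linear_combination -2 * e4 + 10 * h
  exact one_ne_zero (α := 𝓞 L ⧸ M) (by linear_combination -e2 + (-5 * t ^ 3 - (k : 𝓞 L ⧸ M)) * h20)


open Polynomial in
theorem aux_core (K : Type) [Field K] [NumberField K] (hK : Module.finrank ℚ K = 2)
    (w : K) (d : ℤ) (hd : d < 0) (hw : w ^ 2 = (d : K))
    (F : ℤ[X]) (hF : F.Monic) (hdeg : F.natDegree = 5)
    (h4 : F.coeff 4 = -1) (h3 : F.coeff 3 = 0) (h2 : Odd (F.coeff 2))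
    (hirr : Irreducible (F.map (algebraMap ℤ ℚ)))
    (hroot : ∀ (L : Type) [Field L] [CharZero L] [Algebra K L] (z : L), aeval z F = 0 →
      ∃ z' : L, ∃ G : L[X], F.map (algebraMap ℤ L) = (X - C z) * G ∧ eval z' G = 0) :
    5 ∣ Nat.card (ClassGroup (𝓞 K)) := by
  obtain ⟨L, _, _, _, z, hz, hfr, htop, hmin, hminQ⟩ := aux_exL K hK (F.map (algebraMap ℤ ℚ))
    (hF.map _) (by rw [hF.natDegree_map, hdeg]) hirr
  rw [aeval_map_algebraMap] at hz
  obtain ⟨z', G, hG, hz'⟩ := hroot L z hz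
  have hev : aeval z' F = 0 := by
    rw [← eval_map_algebraMap, hG, eval_mul, hz', mul_zero]
  have hsep : (F.map (algebraMap ℤ L)).Separable := by
    have h1 := (hirr.separable).map (f := algebraMap ℚ L)
    rwa [Polynomial.map_map, ← IsScalarTower.algebraMap_eq] at h1
  have hne : z' ≠ z := by
    rintro rfl
    have h1 := hsep.squarefree
    rw [hG] at h1
    have h6 : (X - C z') ∣ G := dvd_iff_isRoot.2 hz'
    have := h1 (X - C z') (mul_dvd_mul_left _ h6)
    exact not_isUnit_X_sub_C z' this
  have : IsGalois K L := aux_gal K L hfr z z' htop hne (by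
    rw [hmin, aeval_map_algebraMap, aeval_map_algebraMap]; exact hev)
  obtain ⟨m, hm, hu⟩ := aux_units K hK w d hd hw
  exact aux_class K L hfr m hm hu (aux_unram K L hfr z htop F hF hdeg h4 h3 h2 hz)


theorem aux_second_p {L : Type*} [Field L] [CharZero L] (g l θ w : L) (hl : l^2 = 5*g^2+4)
    (hg : g * (5*g+2*l) ≠ 0) (hdl : -145*g^3 - 65*g^2*l - 36*g ≠ 0)
    (hw : w^2 = -(1*(g*(5*g+2*l))))
    (hf : θ^5 - 10*θ^3 - 25*θ^2*g - 10*θ^2*l - 50*θ*g^2 - 25*θ*g*l - 15*θ - 125/2*g^3 - 55/2*g^2*l - 25*g - 2*l = 0) :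
    ∃ x : L, x^4 + θ*x^3 + (θ^2-10)*x^2 + (θ^3-10*θ-25*g-10*l)*x
      + (θ^4 - 10*θ^2 - 5*(5*g+2*l)*θ - 50*g^2 - 25*g*l - 15) = 0 := by
  obtain ⟨dl, edl⟩ : ∃ dl : L, dl = -145*g^3 - 65*g^2*l - 36*g := ⟨_, rfl⟩
  obtain ⟨ND, eND⟩ : ∃ ND : L, ND = -20*θ^4 - 10*θ^3*g - 2*θ^3*l + 110*θ^2*g^2 + 50*θ^2*g*l + 228*θ^2 - 325*θ*g^3 - 145*θ*g^2*l + 390*θ*g + 194*θ*l + 570*g^2 + 290*g*l + 176 := ⟨_, rfl⟩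
  obtain ⟨N2, eN2⟩ : ∃ N2 : L, N2 = -100*θ^4*g - 60*θ^4*l + 500*θ^3*g^2 + 220*θ^3*g*l + 120*θ^3 - 725*θ^2*g^3 - 325*θ^2*g^2*l + 520*θ^2*g + 540*θ^2*l + 900*θ*g^2 + 500*θ*g*l + 1320*θ - 4100*g^3 - 1900*g^2*l + 120*g + 240*l := ⟨_, rfl⟩
  obtain ⟨NX, eNX⟩ : ∃ NX : L, NX = -20*θ^4*g - 6*θ^4*l + 45*θ^3*g^2 + 21*θ^3*g*l + 12*θ^3 + 55*θ^2*g^3 + 25*θ^2*g^2*l + 184*θ^2*g + 54*θ^2*l - 850*θ*g^4 - 380*θ*g^3*l - 65*θ*g^2 + 111*θ*g*l + 132*θ - 125*g^3 - 45*g^2*l + 100*g + 24*l := ⟨_, rfl⟩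
  obtain ⟨Nt, eNt⟩ : ∃ Nt : L, Nt = -45*θ^4*g - 19*θ^4*l + 55*θ^3*g^2 + 25*θ^3*g*l + 14*θ^3 + 475*θ^2*g + 195*θ^2*l + 1395*θ*g^2 + 615*θ*g*l + 586*θ + 2125*g^3 + 955*g^2*l + 1150*g + 124*l := ⟨_, rfl⟩
  rw [← edl] at hdl
  have hD2 : ND^2 = dl*N2 := by
    rw [edl, eND, eN2]
    linear_combination (400*θ^3 + 400*θ^2*g + 80*θ^2*l - 4300*θ*g^2 - 1960*θ*g*l + 4*θ*l^2 - 5120*θ + 10800*g^3 + 4360*g^2*l - 200*g*l^2 - 6160*g - 3872*l)*hf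
      + (-820*θ^4*g^2 + 64*θ^4 - 200*θ^3*g^3 - 1260*θ^3*g + 40*θ^3*l - 100*θ^2*g^4 - 160*θ^2*g^2 - 1900*θ^2*g*l - 864*θ^2 - 6250*θ*g^3 - 4890*θ*g^2*l + 8900*θ*g + 8*θ*l - 16100*g^4 - 5500*g^3*l - 3060*g^2 - 400*g*l - 7744)*hl
  have hDt : 4*(ND*Nt) = dl*(θ*(3*θ^2*dl + N2 - 40*dl) + 4*(dl*(-2*θ^3+20*θ+10*(5*g+2*l)))) := by
    rw [edl, eND, eN2, eNt]
    linear_combination (3600*θ^3*g + 1520*θ^3*l - 2600*θ^2*g^2 - 880*θ^2*g*l + 152*θ^2*l^2 - 1120*θ^2 - 22000*θ*g^3 - 18800*θ*g^2*l - 4000*θ*g*l^2 - 43600*θ*g - 17840*θ*l + 68200*g^4 + 57600*g^3*l + 12120*g^2*l^2 - 84080*g^2 - 36720*g*l + 416*l^2 - 45312)*hf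
      + (-200*θ^4*g^3 + 24440*θ^4*g + 1520*θ^4*l - 73040*θ^3*g^2 - 36200*θ^3*g*l - 18592*θ^3 + 61100*θ^2*g^3 + 25380*θ^2*g^2*l - 132520*θ^2*g + 4464*θ^2*l + 432600*θ*g^4 + 193000*θ*g^3*l + 54560*θ*g^2 + 2400*θ*g*l + 66784*θ - 11500*g^5 - 4700*g^4*l + 167800*g^3 + 35680*g^2*l + 80800*g + 832*l)*hl
  have ht2 : 16*Nt^2 = (3*θ^2*dl + N2 - 40*dl)^2 - 64*(dl^2*(θ^4 - 10*θ^2 - 5*(5*g+2*l)*θ - 50*g^2 - 25*g*l - 15)) := by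
    rw [edl, eN2, eNt]
    linear_combination (22400*θ^3*g^2 + 15360*θ^3*g*l + 2176*θ^3*l^2 + 20800*θ^2*g^3 + 34560*θ^2*g^2*l + 11200*θ^2*g*l^2 + 3840*θ^2*g + 5888*θ^2*l - 433600*θ*g^4 - 419200*θ*g^3*l - 100800*θ*g^2*l^2 - 472960*θ*g^2 - 300160*θ*g*l - 32000*θ*l^2 - 11264*θ + 1160000*g^5 + 1030400*g^4*l + 228800*g^3*l^2 - 358400*g^3 - 445440*g^2*l - 75520*g*l^2 - 427520*g + 21760*l^3 - 181248*l)*hf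
      + (447360*θ^4*g^2 + 166400*θ^4*g*l + 41728*θ^4 - 1465600*θ^3*g^3 - 668160*θ^3*g^2*l - 865280*θ^3*g - 98048*θ^3*l + 178400*θ^2*g^4 + 76000*θ^2*g^3*l - 4104960*θ^2*g^2 - 988800*θ^2*g*l + 217600*θ^2*l^2 - 895744*θ^2 + 548000*θ*g^5 + 244000*θ*g^4*l - 7273600*θ*g^3 - 1881600*θ*g^2*l + 544000*θ*g*l^2 - 2688000*θ*g + 262400*θ*l - 1044000*g^6 - 468000*g^5*l - 3638400*g^4 - 259200*g^3*l + 598400*g^2*l^2 - 1698560*g^2 + 392960*g*l + 43520*l^2)*hl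
  have hR : -(4*NX^2) = 1*(g*(5*g+2*l))*dl*(θ^2*dl - 2*(θ*ND) + N2 - 2*(3*θ^2*dl + N2 - 40*dl) + 8*Nt) := by
    rw [edl, eND, eN2, eNt, eNX]
    linear_combination (-1600*θ^3*g^2 - 960*θ^3*g*l - 144*θ^3*l^2 + 7200*θ^2*g^3 + 5520*θ^2*g^2*l + 1008*θ^2*g*l^2 + 1920*θ^2*g + 576*θ^2*l + 700*θ*g^4 - 920*θ*g^3*l - 564*θ*g^2*l^2 + 9120*θ*g^2 + 5856*θ*g*l + 1152*θ*l^2 - 576*θ - 126800*g^5 - 95240*g^4*l - 17240*g^3*l^2 - 42720*g^3 - 20032*g^2*l - 6864*g*l^2 + 22656*g - 1440*l^3 + 6912*l)*hf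
      + (-23980*θ^4*g^4 - 11440*θ^4*g^3*l + 5616*θ^4*g^2 + 6480*θ^4*g*l + 4608*θ^4 - 34200*θ^3*g^5 - 15600*θ^3*g^4*l + 37860*θ^3*g^3 + 15600*θ^3*g^2*l - 9264*θ^3*g - 3168*θ^3*l + 273500*θ^2*g^6 + 122200*θ^2*g^5*l - 68600*θ^2*g^4 - 76620*θ^2*g^3*l - 185440*θ^2*g^2 - 73824*θ^2*g*l - 14400*θ^2*l^2 + 19584*θ^2 + 106850*θ*g^5 + 52690*θ*g^4*l - 284020*θ*g^3 - 213048*θ*g^2*l - 36000*θ*g*l^2 - 54960*θ*g - 19296*θ*l + 207500*g^6 + 90100*g^5*l - 226500*g^4 - 215480*g^3*l - 39600*g^2*l^2 - 131600*g^2 - 49728*g*l - 2880*l^2)*hl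
  clear edl eND eN2 eNX eNt hf
  obtain ⟨D, hD⟩ : ∃ D, ND = dl * D := ⟨ND / dl, by field_simp⟩
  obtain ⟨t, ht⟩ : ∃ t, Nt = dl * t := ⟨Nt / dl, by field_simp⟩
  obtain ⟨Y, hY⟩ : ∃ Y, NX = dl * Y := ⟨NX / dl, by field_simp⟩
  subst hD ht hY
  have hN2 : N2 = dl * D ^ 2 := by
    apply mul_left_cancel₀ hdl
    linear_combination -hD2
  subst hN2
  have k1 : 4*(D*t) = θ*(3*θ^2 + D^2 - 40) + 4*(-2*θ^3+20*θ+10*(5*g+2*l)) := by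
    apply mul_left_cancel₀ (pow_ne_zero 2 hdl)
    linear_combination hDt
  have k2 : 16*t^2 = (3*θ^2 + D^2 - 40)^2 - 64*(θ^4 - 10*θ^2 - 5*(5*g+2*l)*θ - 50*g^2 - 25*g*l - 15) := by
    apply mul_left_cancel₀ (pow_ne_zero 2 hdl)
    linear_combination ht2
  have k3 : -(4*Y^2) = 1*(g*(5*g+2*l))*(θ^2 - 2*(θ*D) + D^2 - 2*(3*θ^2 + D^2 - 40) + 8*t) := by
    apply mul_left_cancel₀ (pow_ne_zero 2 hdl)
    linear_combination hR
  obtain ⟨R, hR'⟩ : ∃ R, w * Y = 1*(g*(5*g+2*l)) * R := by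
    refine ⟨w * Y / (1*(g*(5*g+2*l))), ?_⟩
    have hk : (1 : L) ≠ 0 := by norm_num
    rw [mul_div_cancel₀ _ (mul_ne_zero hk hg)]
  have k4 : 4*R^2 = θ^2 - 2*(θ*D) + D^2 - 2*(3*θ^2 + D^2 - 40) + 8*t := by
    have hk : (1 : L) ≠ 0 := by norm_num
    apply mul_left_cancel₀ (pow_ne_zero 2 (mul_ne_zero hk hg))
    linear_combination (-4)*(w*Y + 1*(g*(5*g+2*l)) * R)*hR' + 4*Y^2*hw + (1*(g*(5*g+2*l)))*k3
  refine ⟨((-θ+D)/2+R)/2, ?_⟩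
  obtain ⟨x, hx⟩ : ∃ x, x = ((-θ+D)/2+R)/2 := ⟨_, rfl⟩
  rw [← hx]
  have k5 : x^2 - (-θ+D)/2*x + ((3*θ^2+D^2-40)/4 - t)/2 = 0 := by
    rw [hx]
    linear_combination k4/16
  linear_combination (x^2 - (-θ-D)/2*x + ((3*θ^2+D^2-40)/4 + t)/2) * k5 + 1/8*x*k1 + 1/64*k2

theorem aux_second_m {L : Type*} [Field L] [CharZero L] (g l θ w : L) (hl : l^2 = 5*g^2+4)
    (hg : g * (5*g+2*l) ≠ 0) (hdl : 55*g^3 + 25*g^2*l ≠ 0)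
    (hw : w^2 = -(5*(g*(5*g+2*l))))
    (hf : θ^5 - 10*θ^3 - 25*θ^2*g - 10*θ^2*l - 50*θ*g^2 - 25*θ*g*l - 15*θ - 75/2*g^3 - 35/2*g^2*l - 25*g - 2*l = 0) :
    ∃ x : L, x^4 + θ*x^3 + (θ^2-10)*x^2 + (θ^3-10*θ-25*g-10*l)*x
      + (θ^4 - 10*θ^2 - 5*(5*g+2*l)*θ - 50*g^2 - 25*g*l - 15) = 0 := by
  obtain ⟨dl, edl⟩ : ∃ dl : L, dl = 55*g^3 + 25*g^2*l := ⟨_, rfl⟩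
  obtain ⟨ND, eND⟩ : ∃ ND : L, ND = 20*θ^4 - 30*θ^3*g - 10*θ^3*l + 70*θ^2*g^2 + 30*θ^2*g*l - 180*θ^2 - 125*θ*g^3 - 55*θ*g^2*l - 290*θ*g - 110*θ*l - 330*g^2 - 190*g*l - 80 := ⟨_, rfl⟩
  obtain ⟨N2, eN2⟩ : ∃ N2 : L, N2 = 180*θ^4*g + 100*θ^4*l - 300*θ^3*g^2 - 140*θ^3*g*l - 200*θ^3 + 275*θ^2*g^3 + 125*θ^2*g^2*l - 1420*θ^2*g - 900*θ^2*l - 7100*θ*g^2 - 3140*θ*g*l - 2200*θ - 8500*g^3 - 3700*g^2*l - 5320*g - 400*l := ⟨_, rfl⟩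
  obtain ⟨NX, eNX⟩ : ∃ NX : L, NX = -120*θ^4*g - 50*θ^4*l + 195*θ^3*g^2 + 85*θ^3*g*l + 100*θ^3 - 325*θ^2*g^3 - 145*θ^2*g^2*l + 980*θ^2*g + 450*θ^2*l + 450*θ*g^4 + 200*θ*g^3*l + 4085*θ*g^2 + 1735*θ*g*l + 1100*θ + 5625*g^3 + 2535*g^2*l + 2780*g + 200*l := ⟨_, rfl⟩
  obtain ⟨Nt, eNt⟩ : ∃ Nt : L, Nt = -35*θ^4*g - 15*θ^4*l + 35*θ^3*g^2 + 15*θ^3*g*l + 30*θ^3 + 325*θ^2*g + 135*θ^2*l + 1295*θ*g^2 + 585*θ*g*l + 330*θ + 1925*g^3 + 865*g^2*l + 910*g + 60*l := ⟨_, rfl⟩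
  rw [← edl] at hdl
  have hD2 : ND^2 = dl*N2 := by
    rw [edl, eND, eN2]
    linear_combination (400*θ^3 - 1200*θ^2*g - 400*θ^2*l + 3700*θ*g^2 + 1800*θ*g*l + 100*θ*l^2 - 3200*θ - 9200*g^3 - 5400*g^2*l - 600*g*l^2 - 2800*g - 800*l)*hf
      + (-500*θ^4*g^2 - 800*θ^4 + 200*θ^3*g^3 + 1700*θ^3*g + 1000*θ^3*l - 100*θ^2*g^4 - 2800*θ^2*g^2 - 3500*θ^2*g*l + 4800*θ^2 - 30350*θ*g^3 - 13250*θ*g^2*l + 18900*θ*g + 200*θ*l - 24500*g^4 - 10500*g^3*l + 6300*g^2 - 1200*g*l - 1600)*hl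
  have hDt : 4*(ND*Nt) = dl*(θ*(3*θ^2*dl + N2 - 40*dl) + 4*(dl*(-2*θ^3+20*θ+10*(5*g+2*l)))) := by
    rw [edl, eND, eN2, eNt]
    linear_combination (-2800*θ^3*g - 1200*θ^3*l + 7000*θ^2*g^2 + 4400*θ^2*g*l + 600*θ^2*l^2 + 2400*θ^2 - 14000*θ*g^3 - 11600*θ*g^2*l - 2400*θ*g*l^2 + 19600*θ*g + 8400*θ*l + 17400*g^4 + 13600*g^3*l + 2600*g^2*l^2 + 88400*g^2 + 29200*g*l - 4800*l^2 + 28800)*hf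
      + (200*θ^4*g^3 + 2600*θ^4*g + 6000*θ^4*l - 14000*θ^3*g^2 - 9000*θ^3*g*l - 19200*θ^3 - 55900*θ^2*g^3 - 23500*θ^2*g^2*l + 17000*θ^2*g - 46800*θ^2*l + 54200*θ*g^4 + 23000*θ*g^3*l - 235600*θ*g^2 - 124800*θ*g*l - 81600*θ - 9500*g^5 - 4500*g^4*l - 234200*g^3 - 78800*g^2*l - 107200*g - 9600*l)*hl
  have ht2 : 16*Nt^2 = (3*θ^2*dl + N2 - 40*dl)^2 - 64*(dl^2*(θ^4 - 10*θ^2 - 5*(5*g+2*l)*θ - 50*g^2 - 25*g*l - 15)) := by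
    rw [edl, eN2, eNt]
    linear_combination (-12800*θ^3*g^2 - 19200*θ^3*g*l - 6400*θ^3*l^2 + 68800*θ^2*g^3 + 76800*θ^2*g^2*l + 20800*θ^2*g*l^2 + 38400*θ^2*g + 25600*θ^2*l - 228800*θ*g^4 - 227200*θ*g^3*l - 56000*θ*g^2*l^2 - 67200*θ*g^2 + 67200*θ*g*l + 51200*θ*l^2 - 25600*θ + 264000*g^5 + 243200*g^4*l + 56000*g^3*l^2 + 1161600*g^3 + 883200*g^2*l + 16000*g*l^2 + 550400*g - 64000*l^3 + 307200*l)*hf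
      + (214400*θ^4*g^2 + 48000*θ^4*g*l + 204800*θ^4 - 372800*θ^3*g^3 - 152000*θ^3*g^2*l - 342400*θ^3*g - 140800*θ^3*l - 1044000*θ^2*g^4 - 476000*θ^2*g^3*l + 1606400*θ^2*g^2 - 118400*θ^2*g*l - 640000*θ^2*l^2 + 870400*θ^2 + 44000*θ*g^5 + 20000*θ*g^4*l + 3638400*θ*g^3 - 2016000*θ*g^2*l - 1600000*θ*g*l^2 + 1545600*θ*g - 857600*θ*l - 44000*g^6 - 20000*g^5*l + 1624000*g^4 - 2008000*g^3*l - 1120000*g^2*l^2 + 323200*g^2 - 1568000*g*l - 128000*l^2)*hl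
  have hR : -(4*NX^2) = 5*(g*(5*g+2*l))*dl*(θ^2*dl - 2*(θ*ND) + N2 - 2*(3*θ^2*dl + N2 - 40*dl) + 8*Nt) := by
    rw [edl, eND, eN2, eNt, eNX]
    linear_combination (-57600*θ^3*g^2 - 48000*θ^3*g*l - 10000*θ^3*l^2 + 187200*θ^2*g^3 + 159600*θ^2*g^2*l + 34000*θ^2*g*l^2 + 96000*θ^2*g + 40000*θ^2*l - 464100*θ*g^4 - 401800*θ*g^3*l - 86900*θ*g^2*l^2 + 208800*θ*g^2 + 276000*θ*g*l + 80000*θ*l^2 - 40000*θ + 994000*g^5 + 866200*g^4*l + 188600*g^3*l^2 + 3084800*g^3 + 1867200*g^2*l - 2000*g*l^2 + 1232000*g - 100000*l^3 + 480000*l)*hf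
      + (114900*θ^4*g^4 + 50000*θ^4*g^3*l + 233200*θ^4*g^2 + 90000*θ^4*g*l + 320000*θ^4 - 113000*θ^3*g^5 - 50000*θ^3*g^4*l - 460700*θ^3*g^3 - 194000*θ^3*g^2*l - 478000*θ^3*g - 220000*θ^3*l + 79500*θ^2*g^6 + 35000*θ^2*g^5*l - 515400*θ^2*g^4 - 241500*θ^2*g^3*l + 4152800*θ^2*g^2 - 452000*θ^2*g*l - 1000000*θ^2*l^2 + 1360000*θ^2 + 2573750*θ*g^5 + 1144250*θ*g^4*l + 5007100*θ*g^3 - 3823800*θ*g^2*l - 2500000*θ*g*l^2 + 1746000*θ*g - 1340000*θ*l + 327500*g^6 + 145500*g^5*l + 409500*g^4 - 3627800*g^3*l - 1750000*g^2*l^2 + 28400*g^2 - 2504000*g*l - 200000*l^2)*hl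
  clear edl eND eN2 eNX eNt hf
  obtain ⟨D, hD⟩ : ∃ D, ND = dl * D := ⟨ND / dl, by field_simp⟩
  obtain ⟨t, ht⟩ : ∃ t, Nt = dl * t := ⟨Nt / dl, by field_simp⟩
  obtain ⟨Y, hY⟩ : ∃ Y, NX = dl * Y := ⟨NX / dl, by field_simp⟩
  subst hD ht hY
  have hN2 : N2 = dl * D ^ 2 := by
    apply mul_left_cancel₀ hdl
    linear_combination -hD2
  subst hN2
  have k1 : 4*(D*t) = θ*(3*θ^2 + D^2 - 40) + 4*(-2*θ^3+20*θ+10*(5*g+2*l)) := by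
    apply mul_left_cancel₀ (pow_ne_zero 2 hdl)
    linear_combination hDt
  have k2 : 16*t^2 = (3*θ^2 + D^2 - 40)^2 - 64*(θ^4 - 10*θ^2 - 5*(5*g+2*l)*θ - 50*g^2 - 25*g*l - 15) := by
    apply mul_left_cancel₀ (pow_ne_zero 2 hdl)
    linear_combination ht2
  have k3 : -(4*Y^2) = 5*(g*(5*g+2*l))*(θ^2 - 2*(θ*D) + D^2 - 2*(3*θ^2 + D^2 - 40) + 8*t) := by
    apply mul_left_cancel₀ (pow_ne_zero 2 hdl)
    linear_combination hR
  obtain ⟨R, hR'⟩ : ∃ R, w * Y = 5*(g*(5*g+2*l)) * R := by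
    refine ⟨w * Y / (5*(g*(5*g+2*l))), ?_⟩
    have hk : (5 : L) ≠ 0 := by norm_num
    rw [mul_div_cancel₀ _ (mul_ne_zero hk hg)]
  have k4 : 4*R^2 = θ^2 - 2*(θ*D) + D^2 - 2*(3*θ^2 + D^2 - 40) + 8*t := by
    have hk : (5 : L) ≠ 0 := by norm_num
    apply mul_left_cancel₀ (pow_ne_zero 2 (mul_ne_zero hk hg))
    linear_combination (-4)*(w*Y + 5*(g*(5*g+2*l)) * R)*hR' + 4*Y^2*hw + (5*(g*(5*g+2*l)))*k3
  refine ⟨((-θ+D)/2+R)/2, ?_⟩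
  obtain ⟨x, hx⟩ : ∃ x, x = ((-θ+D)/2+R)/2 := ⟨_, rfl⟩
  rw [← hx]
  have k5 : x^2 - (-θ+D)/2*x + ((3*θ^2+D^2-40)/4 - t)/2 = 0 := by
    rw [hx]
    linear_combination k4/16
  linear_combination (x^2 - (-θ-D)/2*x + ((3*θ^2+D^2-40)/4 + t)/2) * k5 + 1/8*x*k1 + 1/64*k2


open Polynomial in
theorem aux_irr (c2 c1 c0 : ℤ) (hr : ∀ r : ℤ, r^5 - r^4 + c2*r^2 + c1*r + c0 ≠ 0)
    (hq : ∀ a b : ℤ, a^4+3*a^2*b+b^2 - a^3-2*a*b + c2*a + c1 = 0 →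
      a^3*b+2*a*b^2 - a^2*b - b^2 + c2*b + c0 = 0 → False) (F : ℤ[X])
    (hF : F = X^5 - X^4 + C c2 * X^2 + C c1 * X + C c0) (hm : F.Monic) (hd : F.natDegree = 5) :
    Irreducible (F.map (algebraMap ℤ ℚ)) := by
  rw [← hm.irreducible_iff_irreducible_map_fraction_map]
  rw [hm.irreducible_iff_lt_natDegree_lt (by rintro rfl; simp at hd)]
  intro q hqm hqd hdvd
  rw [hd, Finset.mem_Ioc] at hqd
  have : q.natDegree = 1 ∨ q.natDegree = 2 := by omega
  rcases this with h1 | h2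
  · have hq1 : q = X - C (-(q.coeff 0)) := by
      conv_lhs => rw [hqm.eq_X_add_C h1]
      simp
    rw [hq1, dvd_iff_isRoot, IsRoot, hF] at hdvd
    apply hr (-(q.coeff 0))
    simpa using hdvd
  · obtain ⟨a, ha⟩ : ∃ a, a = -(q.coeff 1) := ⟨_, rfl⟩
    obtain ⟨b, hb⟩ : ∃ b, b = -(q.coeff 0) := ⟨_, rfl⟩
    have hq2 : q = X^2 - C a * X - C b := by
      ext n
      have h3 := hqm.coeff_natDegree
      rw [h2] at h3
      simp only [coeff_sub, coeff_C_mul, coeff_X_pow, coeff_X, coeff_C]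
      rcases n with _ | _ | _ | n
      · norm_num [hb]
      · norm_num [ha]
      · norm_num [h3]
      · rw [coeff_eq_zero_of_natDegree_lt (by omega)]
        have t1 : ¬ (n + 1 + 1 + 1 = 2) := by omega
        have t2 : ¬ (1 = n + 1 + 1 + 1) := by omega
        have t3 : ¬ (n + 1 + 1 + 1 = 0) := by omega
        rw [if_neg t1, if_neg t2, if_neg t3]; norm_num
    have hid : F = q * (X^3 + C (a - 1) * X^2 + C (a^2+b-a) * X + C (a^3+2*a*b-a^2-b+c2)) +
      (C (a^4+3*a^2*b+b^2 - a^3-2*a*b + c2*a + c1) * X + C (a^3*b+2*a*b^2 - a^2*b - b^2 + c2*b + c0)) := by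
      rw [hF, hq2]
      simp only [C_add, C_sub, C_mul, C_pow, C_1, map_ofNat]
      ring
    have hdv2 : q ∣ (C (a^4+3*a^2*b+b^2 - a^3-2*a*b + c2*a + c1) * X + C (a^3*b+2*a*b^2 - a^2*b - b^2 + c2*b + c0)) := by
      rw [hid] at hdvd
      exact (dvd_add_right (dvd_mul_right _ _)).1 hdvd
    have hz := eq_zero_of_dvd_of_natDegree_lt hdv2 (by
      rw [h2]
      exact lt_of_le_of_lt (natDegree_linear_le) (by norm_num))
    have e1 := congrArg (fun p => coeff p 1) hz
    have e0 := congrArg (fun p => coeff p 0) hz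
    simp only [coeff_add, coeff_C_mul, coeff_C, coeff_X, coeff_zero] at e1 e0
    norm_num at e1 e0
    exact hq a b (by linear_combination e1) (by linear_combination e0)


open Polynomial in
theorem aux_main (K : Type) [Field K] [NumberField K] (hK : Module.finrank ℚ K = 2)
    (w : K) (d : ℤ) (hd : d < 0) (hw : w ^ 2 = (d : K))
    (g l T c2 c1 c0 : ℤ) (e2 : 25 * c2 = 4 - 5*g - 2*l)
    (e1 : 125 * c1 = -4 + 2*(5*g+2*l) - (5*g*l+10*g^2+4))
    (e0 : 6250 * c0 = 8 - 10*(5*g+2*l) + 10*(5*g*l+10*g^2+4) - T) (hodd : Odd c2)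
    (hsec : ∀ (L : Type) [Field L] [CharZero L] [Algebra K L] (θ : L),
      2*(θ^5-10*θ^3-(25*(g:L)+10*(l:L))*θ^2-(50*(g:L)^2+25*(g:L)*(l:L)+15)*θ) - (T:L) = 0 →
      ∃ x : L, x^4 + θ*x^3 + (θ^2-10)*x^2 + (θ^3-10*θ-25*(g:L)-10*(l:L))*x
      + (θ^4 - 10*θ^2 - 5*(5*(g:L)+2*(l:L))*θ - 50*(g:L)^2 - 25*(g:L)*(l:L) - 15) = 0)
    (hr : ∀ x : ℤ, 2*(x^5-10*x^3-(25*g+10*l)*x^2-(50*g^2+25*g*l+15)*x) - T ≠ 0)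
    (hq : ∀ A B : ℤ, A^4+3*A^2*B+B^2-10*(A^2+B)-(25*g+10*l)*A-(50*g^2+25*g*l+15) = 0 →
      2*(A^3*B+2*A*B^2-10*A*B-(25*g+10*l)*B) - T = 0 → False) :
    5 ∣ Nat.card (ClassGroup (𝓞 K)) := by
  obtain ⟨F, hF⟩ : ∃ F : ℤ[X], F = X^5 - X^4 + C c2 * X^2 + C c1 * X + C c0 := ⟨_, rfl⟩
  have hmd : F.natDegree = 5 ∧ F.Monic := by
    have hd : F.natDegree = 5 := by rw [hF]; compute_degree!
    refine ⟨hd, ?_⟩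
    rw [Monic, leadingCoeff, hd, hF]
    simp only [coeff_add, coeff_sub, coeff_C_mul, coeff_X_pow, coeff_X, coeff_C]
    norm_num
  have hcf : F.coeff 4 = -1 ∧ F.coeff 3 = 0 ∧ F.coeff 2 = c2 := by
    rw [hF]
    simp only [coeff_add, coeff_sub, coeff_C_mul, coeff_X_pow, coeff_X, coeff_C]
    norm_num
  have hirr := aux_irr c2 c1 c0 (by
    intro r h
    apply hr (5*r-1)
    linear_combination 6250 * h - 250*r^2*e2 - 50*r*e1 - e0) (by
    intro a b h1 h2
    apply hq (5*a-2) (5*a-2+25*b+1)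
    · linear_combination 625*h1 - 25*a*e2 - 5*e1
    · linear_combination 6250*h2 - 250*b*e2 - e0 + 1250*h1 - 50*a*e2 - 10*e1) F hF hmd.2 hmd.1
  refine aux_core K hK w d hd hw F hmd.2 hmd.1 hcf.1 hcf.2.1 (by rw [hcf.2.2]; exact hodd) hirr ?_
  intro L _ _ _ z hz
  have f2 : 25 * (c2:L) = 4 - 5*g - 2*l := by exact_mod_cast congrArg (Int.cast : ℤ → L) e2
  have f1 : 125 * (c1:L) = -4 + 2*(5*g+2*l) - (5*g*l+10*g^2+4) := by
    exact_mod_cast congrArg (Int.cast : ℤ → L) e1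
  have f0 : 6250 * (c0:L) = 8 - 10*(5*g+2*l) + 10*(5*g*l+10*g^2+4) - T := by
    exact_mod_cast congrArg (Int.cast : ℤ → L) e0
  have hz' : z^5 - z^4 + c2*z^2 + c1*z + c0 = 0 := by
    rw [hF] at hz
    simpa using hz
  obtain ⟨x, hx⟩ := hsec L (5*z-1) (by
    linear_combination 6250 * hz' - 250*z^2*f2 - 50*z*f1 - f0)
  refine ⟨(x+1)/5, X^4 + C (z-1) * X^3 + C (z^2-z) * X^2 + C (z^3-z^2+c2) * X + C (z^4-z^3+c2*z+c1), ?_, ?_⟩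
  · have hc : C (c0:L) = - C (z^5 - z^4 + c2*z^2 + c1*z) := by
      rw [← C_neg]; congr 1; linear_combination hz'
    have hcc : ∀ c : ℤ, (C c : ℤ[X]).map (algebraMap ℤ L) = C (c : L) := by
      intro c
      rw [Polynomial.map_C, algebraMap_int_eq, Int.coe_castRingHom]
    rw [hF, Polynomial.map_add, Polynomial.map_add, Polynomial.map_add, Polynomial.map_sub,
      Polynomial.map_mul, Polynomial.map_mul, Polynomial.map_pow, Polynomial.map_pow,
      Polynomial.map_pow, map_X, hcc, hcc, hcc, hc]
    simp only [C_add, C_sub, C_mul, C_pow, C_1]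
    ring
  · simp only [eval_add, eval_mul, eval_pow, eval_X, eval_C]
    have h625 : (625 : L) ≠ 0 := by norm_num
    apply mul_left_cancel₀ h625
    linear_combination hx + 5*(x+1+5*z)*f2 + 5*f1


theorem aux_int (g l : ℤ) (hl : l^2 = 5*g^2+4) (hg : 125 ∣ g) (hl5 : l % 5 = 2) (hodd : Odd g) :
    ∃ G m : ℤ, g = 125*G ∧ l = 2 + 78125*m ∧ Odd G ∧ Odd m := by
  obtain ⟨G, rfl⟩ := hg
  have h1 : (78125:ℤ) ∣ (l-2)*(l+2) := ⟨G^2, by linear_combination hl⟩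
  have hp : Prime (5:ℤ) := by norm_num
  have hc : IsCoprime (78125:ℤ) (l+2) := by
    have : IsCoprime (5:ℤ) (l+2) := by
      rw [Prime.coprime_iff_not_dvd hp]
      omega
    have := IsCoprime.pow_left (m := 7) this
    norm_num at this
    exact this
  obtain ⟨m, hm⟩ := hc.dvd_of_dvd_mul_right h1
  have hGo : Odd G := by
    rcases Int.even_or_odd G with h | h
    · exfalso; obtain ⟨j, rfl⟩ := h; obtain ⟨i, hi⟩ := hodd; omega
    · exact h
  refine ⟨G, m, rfl, by linarith, hGo, ?_⟩
  rcases Int.even_or_odd m with h | h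
  · exfalso
    obtain ⟨j, rfl⟩ := h
    obtain ⟨i, hi⟩ := hGo
    have e : l = 2 + 2*(78125*j) := by linarith
    rw [e, hi] at hl
    generalize 78125*j = t at hl
    ring_nf at hl
    omega
  · exact h

theorem aux_nz (g l : ℤ) (hl : l^2 = 5*g^2+4) : 9*l+20*g ≠ 0 ∧ l+5*g ≠ 0 ∧ 11*g+5*l ≠ 0 := by
  refine ⟨fun h => ?_, fun h => ?_, fun h => ?_⟩
  · have : 81*l^2 = 400*g^2 := by linear_combination (9*l-20*g)*h
    nlinarith [sq_nonneg g]
  · have : l^2 = 25*g^2 := by linear_combination (l-5*g)*h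
    have : 5*g^2 = 1 := by linarith
    omega
  · have : 25*l^2 = 121*g^2 := by linear_combination (5*l-11*g)*h
    nlinarith [sq_nonneg g]

theorem aux_inst_p (K : Type) [Field K] [NumberField K] (hK : Module.finrank ℚ K = 2)
    (w : K) (g l : ℤ) (hl : l^2 = 5*g^2+4) (hg : 125 ∣ g) (hl5 : l % 5 = 2) (hodd : Odd g)
    (hpos : 0 < g*(5*g+2*l)) (hw : w^2 = ((-(g*(5*g+2*l)) : ℤ) : K))
    (hr : ∀ x : ℤ, 2*(x^5-10*x^3-(25*g+10*l)*x^2-(50*g^2+25*g*l+15)*x)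
      - (125*g^3+55*g^2*l+50*g+4*l) ≠ 0)
    (hq : ∀ A B : ℤ, A^4+3*A^2*B+B^2-10*(A^2+B)-(25*g+10*l)*A-(50*g^2+25*g*l+15) = 0 →
      2*(A^3*B+2*A*B^2-10*A*B-(25*g+10*l)*B) - (125*g^3+55*g^2*l+50*g+4*l) = 0 → False) :
    5 ∣ Nat.card (ClassGroup (𝓞 K)) := by
  obtain ⟨G, m, hG, hm, oG, om⟩ := aux_int g l hl hg hl5 hodd
  obtain ⟨h, hh⟩ : ∃ h : ℤ, G + 275*m = 2*h := by
    obtain ⟨i, rfl⟩ := oG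
    obtain ⟨j, rfl⟩ := om
    exact ⟨i+275*j+138, by ring⟩
  have e : 5*(125*G)^2 = (78125*m)*(78125*m+4) := by rw [hG, hm] at hl; linear_combination -hl
  obtain ⟨n1, n2, n3⟩ := aux_nz g l hl
  have g0 : g ≠ 0 := by rintro rfl; simp at hpos
  refine aux_main K hK w _ (by linarith) hw g l (125*g^3+55*g^2*l+50*g+4*l)
    (-25*G-6250*m) (2500*m-390625*G*m-1250*G^2)
    (-300*m - 25*G^2 + 78125*G*m - 78125*G^2*h) ?_ ?_ ?_ ?_ ?_ hr hq
  · rw [hG, hm]; ring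
  · rw [hG, hm]; ring
  · rw [hG, hm]; linear_combination (244140625*G^2)*hh + 0*e
  · obtain ⟨i, hi⟩ := oG
    exact ⟨-25*i-13-3125*m, by rw [hi]; ring⟩
  · intro L _ _ _ θ hθ
    have hl' : (l:L)^2 = 5*(g:L)^2+4 := by exact_mod_cast congrArg (Int.cast : ℤ → L) hl
    have hw' : (algebraMap K L w)^2 = -(1*((g:L)*(5*(g:L)+2*(l:L)))) := by
      rw [← map_pow, hw, map_intCast]; push_cast; ring
    refine aux_second_p (g:L) (l:L) θ (algebraMap K L w) hl' ?_ ?_ hw' ?_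
    · exact_mod_cast hpos.ne'
    · have e1 : g*(9*l+20*g)*(l+5*g) ≠ 0 := mul_ne_zero (mul_ne_zero g0 n1) n2
      have e2 : ((g*(9*l+20*g)*(l+5*g) : ℤ) : L) ≠ 0 := by exact_mod_cast e1
      intro h0
      apply e2
      push_cast
      linear_combination -h0 + 9*g*hl'
    · push_cast at hθ
      linear_combination (1/2)*hθ

theorem aux_inst_m (K : Type) [Field K] [NumberField K] (hK : Module.finrank ℚ K = 2)
    (w : K) (g l : ℤ) (hl : l^2 = 5*g^2+4) (hg : 125 ∣ g) (hl5 : l % 5 = 2) (hodd : Odd g)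
    (hpos : 0 < g*(5*g+2*l)) (hw : w^2 = ((-(5*(g*(5*g+2*l))) : ℤ) : K))
    (hr : ∀ x : ℤ, 2*(x^5-10*x^3-(25*g+10*l)*x^2-(50*g^2+25*g*l+15)*x)
      - (75*g^3+35*g^2*l+50*g+4*l) ≠ 0)
    (hq : ∀ A B : ℤ, A^4+3*A^2*B+B^2-10*(A^2+B)-(25*g+10*l)*A-(50*g^2+25*g*l+15) = 0 →
      2*(A^3*B+2*A*B^2-10*A*B-(25*g+10*l)*B) - (75*g^3+35*g^2*l+50*g+4*l) = 0 → False) :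
    5 ∣ Nat.card (ClassGroup (𝓞 K)) := by
  obtain ⟨G, m, hG, hm, oG, om⟩ := aux_int g l hl hg hl5 hodd
  obtain ⟨h, hh⟩ : ∃ h : ℤ, 3*G + 875*m = 2*h := by
    obtain ⟨i, rfl⟩ := oG
    obtain ⟨j, rfl⟩ := om
    exact ⟨3*i+875*j+439, by ring⟩
  have e : 5*(125*G)^2 = (78125*m)*(78125*m+4) := by rw [hG, hm] at hl; linear_combination -hl
  obtain ⟨n1, n2, n3⟩ := aux_nz g l hl
  have g0 : g ≠ 0 := by rintro rfl; simp at hpos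
  refine aux_main K hK w _ (by linarith) hw g l (75*g^3+35*g^2*l+50*g+4*l)
    (-25*G-6250*m) (2500*m-390625*G*m-1250*G^2)
    (-300*m + 75*G^2 + 78125*G*m - 15625*G^2*h) ?_ ?_ ?_ ?_ ?_ hr hq
  · rw [hG, hm]; ring
  · rw [hG, hm]; ring
  · rw [hG, hm]; linear_combination (48828125*G^2)*hh + 0*e
  · obtain ⟨i, hi⟩ := oG
    exact ⟨-25*i-13-3125*m, by rw [hi]; ring⟩
  · intro L _ _ _ θ hθ
    have hl' : (l:L)^2 = 5*(g:L)^2+4 := by exact_mod_cast congrArg (Int.cast : ℤ → L) hl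
    have hw' : (algebraMap K L w)^2 = -(5*((g:L)*(5*(g:L)+2*(l:L)))) := by
      rw [← map_pow, hw, map_intCast]; push_cast; ring
    refine aux_second_m (g:L) (l:L) θ (algebraMap K L w) hl' ?_ ?_ hw' ?_
    · exact_mod_cast hpos.ne'
    · have e1 : g*g*(11*g+5*l) ≠ 0 := mul_ne_zero (mul_ne_zero g0 g0) n3
      have e2 : ((g*g*(11*g+5*l) : ℤ) : L) ≠ 0 := by exact_mod_cast e1
      intro h0
      apply e2
      push_cast
      linear_combination (1/5)*h0
    · push_cast at hθ
      linear_combination (1/2)*hθ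


theorem aux_dec_p_4 : (∀ g l : ZMod 4, g*l = 1 →
    (∀ x : ZMod 4, 2*(x^5-10*x^3-(25*g+10*l)*x^2-(50*g^2+25*g*l+15)*x) - (125*g^3+55*g^2*l+50*g+4*l) ≠ 0) ∧
    (∀ A B : ZMod 4, A^4+3*A^2*B+B^2-10*(A^2+B)-(25*g+10*l)*A-(50*g^2+25*g*l+15) = 0 →
      2*(A^3*B+2*A*B^2-10*A*B-(25*g+10*l)*B) - (125*g^3+55*g^2*l+50*g+4*l) = 0 → False)) := by
  decide +kernel

theorem aux_mod_p_4 (g l : ℤ) (h : (g:ZMod 4)*(l:ZMod 4) = 1) :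
    (∀ x : ℤ, 2*(x^5-10*x^3-(25*g+10*l)*x^2-(50*g^2+25*g*l+15)*x) - (125*g^3+55*g^2*l+50*g+4*l) ≠ 0) ∧
    (∀ A B : ℤ, A^4+3*A^2*B+B^2-10*(A^2+B)-(25*g+10*l)*A-(50*g^2+25*g*l+15) = 0 →
      2*(A^3*B+2*A*B^2-10*A*B-(25*g+10*l)*B) - (125*g^3+55*g^2*l+50*g+4*l) = 0 → False) := by
  obtain ⟨h1, h2⟩ := aux_dec_p_4 g l h
  refine ⟨fun x hx => h1 x ?_, fun A B ha hb => h2 A B ?_ ?_⟩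
  · have := congrArg (Int.cast : ℤ → ZMod 4) hx
    push_cast at this
    exact this
  · have := congrArg (Int.cast : ℤ → ZMod 4) ha
    push_cast at this
    exact this
  · have := congrArg (Int.cast : ℤ → ZMod 4) hb
    push_cast at this
    exact this

theorem aux_dec_m_4 : (∀ g l : ZMod 4, g*l = 3 →
    (∀ x : ZMod 4, 2*(x^5-10*x^3-(25*g+10*l)*x^2-(50*g^2+25*g*l+15)*x) - (75*g^3+35*g^2*l+50*g+4*l) ≠ 0) ∧
    (∀ A B : ZMod 4, A^4+3*A^2*B+B^2-10*(A^2+B)-(25*g+10*l)*A-(50*g^2+25*g*l+15) = 0 →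
      2*(A^3*B+2*A*B^2-10*A*B-(25*g+10*l)*B) - (75*g^3+35*g^2*l+50*g+4*l) = 0 → False)) := by
  decide +kernel

theorem aux_mod_m_4 (g l : ℤ) (h : (g:ZMod 4)*(l:ZMod 4) = 3) :
    (∀ x : ℤ, 2*(x^5-10*x^3-(25*g+10*l)*x^2-(50*g^2+25*g*l+15)*x) - (75*g^3+35*g^2*l+50*g+4*l) ≠ 0) ∧
    (∀ A B : ℤ, A^4+3*A^2*B+B^2-10*(A^2+B)-(25*g+10*l)*A-(50*g^2+25*g*l+15) = 0 →
      2*(A^3*B+2*A*B^2-10*A*B-(25*g+10*l)*B) - (75*g^3+35*g^2*l+50*g+4*l) = 0 → False) := by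
  obtain ⟨h1, h2⟩ := aux_dec_m_4 g l h
  refine ⟨fun x hx => h1 x ?_, fun A B ha hb => h2 A B ?_ ?_⟩
  · have := congrArg (Int.cast : ℤ → ZMod 4) hx
    push_cast at this
    exact this
  · have := congrArg (Int.cast : ℤ → ZMod 4) ha
    push_cast at this
    exact this
  · have := congrArg (Int.cast : ℤ → ZMod 4) hb
    push_cast at this
    exact this

theorem aux_dec_m_31_0 : 
    (∀ x : ZMod 31, 2*(x^5-10*x^3-(25*(24)+10*(30))*x^2-(50*(24)^2+25*(24)*(30)+15)*x) - (75*(24)^3+35*(24)^2*(30)+50*(24)+4*(30)) ≠ 0) ∧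
    (∀ A B : ZMod 31, A^4+3*A^2*B+B^2-10*(A^2+B)-(25*(24)+10*(30))*A-(50*(24)^2+25*(24)*(30)+15) = 0 →
      2*(A^3*B+2*A*B^2-10*A*B-(25*(24)+10*(30))*B) - (75*(24)^3+35*(24)^2*(30)+50*(24)+4*(30)) = 0 → False) := by
  decide +kernel

theorem aux_dec_m_31_1 : 
    (∀ x : ZMod 31, 2*(x^5-10*x^3-(25*(-24)+10*(-30))*x^2-(50*(-24)^2+25*(-24)*(-30)+15)*x) - (75*(-24)^3+35*(-24)^2*(-30)+50*(-24)+4*(-30)) ≠ 0) ∧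
    (∀ A B : ZMod 31, A^4+3*A^2*B+B^2-10*(A^2+B)-(25*(-24)+10*(-30))*A-(50*(-24)^2+25*(-24)*(-30)+15) = 0 →
      2*(A^3*B+2*A*B^2-10*A*B-(25*(-24)+10*(-30))*B) - (75*(-24)^3+35*(-24)^2*(-30)+50*(-24)+4*(-30)) = 0 → False) := by
  decide +kernel

theorem aux_mod_m_31 (g l : ℤ) (h : ((g:ZMod 31) = 24 ∧ (l:ZMod 31) = 30) ∨ ((g:ZMod 31) = -24 ∧ (l:ZMod 31) = -30)) :
    (∀ x : ℤ, 2*(x^5-10*x^3-(25*g+10*l)*x^2-(50*g^2+25*g*l+15)*x) - (75*g^3+35*g^2*l+50*g+4*l) ≠ 0) ∧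
    (∀ A B : ℤ, A^4+3*A^2*B+B^2-10*(A^2+B)-(25*g+10*l)*A-(50*g^2+25*g*l+15) = 0 →
      2*(A^3*B+2*A*B^2-10*A*B-(25*g+10*l)*B) - (75*g^3+35*g^2*l+50*g+4*l) = 0 → False) := by
  rcases h with ⟨hg, hl⟩ | ⟨hg, hl⟩
  · obtain ⟨h1, h2⟩ := aux_dec_m_31_0
    refine ⟨fun x hx => h1 x ?_, fun A B ha hb => h2 A B ?_ ?_⟩
    · have := congrArg (Int.cast : ℤ → ZMod 31) hx
      push_cast at this; rw [hg, hl] at this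
      exact this
    · have := congrArg (Int.cast : ℤ → ZMod 31) ha
      push_cast at this; rw [hg, hl] at this
      exact this
    · have := congrArg (Int.cast : ℤ → ZMod 31) hb
      push_cast at this; rw [hg, hl] at this
      exact this
  · obtain ⟨h1, h2⟩ := aux_dec_m_31_1
    refine ⟨fun x hx => h1 x ?_, fun A B ha hb => h2 A B ?_ ?_⟩
    · have := congrArg (Int.cast : ℤ → ZMod 31) hx
      push_cast at this; rw [hg, hl] at this
      exact this
    · have := congrArg (Int.cast : ℤ → ZMod 31) ha
      push_cast at this; rw [hg, hl] at this
      exact this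
    · have := congrArg (Int.cast : ℤ → ZMod 31) hb
      push_cast at this; rw [hg, hl] at this
      exact this

theorem aux_dec_p_61_0 : 
    (∀ x : ZMod 61, 2*(x^5-10*x^3-(25*(6)+10*(1))*x^2-(50*(6)^2+25*(6)*(1)+15)*x) - (125*(6)^3+55*(6)^2*(1)+50*(6)+4*(1)) ≠ 0) ∧
    (∀ A B : ZMod 61, A^4+3*A^2*B+B^2-10*(A^2+B)-(25*(6)+10*(1))*A-(50*(6)^2+25*(6)*(1)+15) = 0 →
      2*(A^3*B+2*A*B^2-10*A*B-(25*(6)+10*(1))*B) - (125*(6)^3+55*(6)^2*(1)+50*(6)+4*(1)) = 0 → False) := by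
  decide +kernel

theorem aux_dec_p_61_1 : 
    (∀ x : ZMod 61, 2*(x^5-10*x^3-(25*(-6)+10*(-1))*x^2-(50*(-6)^2+25*(-6)*(-1)+15)*x) - (125*(-6)^3+55*(-6)^2*(-1)+50*(-6)+4*(-1)) ≠ 0) ∧
    (∀ A B : ZMod 61, A^4+3*A^2*B+B^2-10*(A^2+B)-(25*(-6)+10*(-1))*A-(50*(-6)^2+25*(-6)*(-1)+15) = 0 →
      2*(A^3*B+2*A*B^2-10*A*B-(25*(-6)+10*(-1))*B) - (125*(-6)^3+55*(-6)^2*(-1)+50*(-6)+4*(-1)) = 0 → False) := by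
  decide +kernel

theorem aux_mod_p_61 (g l : ℤ) (h : ((g:ZMod 61) = 6 ∧ (l:ZMod 61) = 1) ∨ ((g:ZMod 61) = -6 ∧ (l:ZMod 61) = -1)) :
    (∀ x : ℤ, 2*(x^5-10*x^3-(25*g+10*l)*x^2-(50*g^2+25*g*l+15)*x) - (125*g^3+55*g^2*l+50*g+4*l) ≠ 0) ∧
    (∀ A B : ℤ, A^4+3*A^2*B+B^2-10*(A^2+B)-(25*g+10*l)*A-(50*g^2+25*g*l+15) = 0 →
      2*(A^3*B+2*A*B^2-10*A*B-(25*g+10*l)*B) - (125*g^3+55*g^2*l+50*g+4*l) = 0 → False) := by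
  rcases h with ⟨hg, hl⟩ | ⟨hg, hl⟩
  · obtain ⟨h1, h2⟩ := aux_dec_p_61_0
    refine ⟨fun x hx => h1 x ?_, fun A B ha hb => h2 A B ?_ ?_⟩
    · have := congrArg (Int.cast : ℤ → ZMod 61) hx
      push_cast at this; rw [hg, hl] at this
      exact this
    · have := congrArg (Int.cast : ℤ → ZMod 61) ha
      push_cast at this; rw [hg, hl] at this
      exact this
    · have := congrArg (Int.cast : ℤ → ZMod 61) hb
      push_cast at this; rw [hg, hl] at this
      exact this
  · obtain ⟨h1, h2⟩ := aux_dec_p_61_1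
    refine ⟨fun x hx => h1 x ?_, fun A B ha hb => h2 A B ?_ ?_⟩
    · have := congrArg (Int.cast : ℤ → ZMod 61) hx
      push_cast at this; rw [hg, hl] at this
      exact this
    · have := congrArg (Int.cast : ℤ → ZMod 61) ha
      push_cast at this; rw [hg, hl] at this
      exact this
    · have := congrArg (Int.cast : ℤ → ZMod 61) hb
      push_cast at this; rw [hg, hl] at this
      exact this


def aux_H1 (g l : ℤ) : Prop := (g:ZMod 4)*(l:ZMod 4) = 1 ∧
  (((g:ZMod 31) = 24 ∧ (l:ZMod 31) = 30) ∨ ((g:ZMod 31) = -24 ∧ (l:ZMod 31) = -30))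

def aux_H2 (g l : ℤ) : Prop := (g:ZMod 4)*(l:ZMod 4) = 3 ∧
  (((g:ZMod 61) = 6 ∧ (l:ZMod 61) = 1) ∨ ((g:ZMod 61) = -6 ∧ (l:ZMod 61) = -1))

theorem aux_H1_neg (g l : ℤ) (h : aux_H1 g l) : aux_H1 (-g) (-l) := by
  obtain ⟨h1, h2⟩ := h
  refine ⟨by push_cast; linear_combination h1, ?_⟩
  rcases h2 with ⟨a, b⟩ | ⟨a, b⟩
  · right; push_cast; rw [a, b]; exact ⟨rfl, rfl⟩
  · left; push_cast; rw [a, b]; exact ⟨neg_neg _, neg_neg _⟩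

theorem aux_H2_neg (g l : ℤ) (h : aux_H2 g l) : aux_H2 (-g) (-l) := by
  obtain ⟨h1, h2⟩ := h
  refine ⟨by push_cast; linear_combination h1, ?_⟩
  rcases h2 with ⟨a, b⟩ | ⟨a, b⟩
  · right; push_cast; rw [a, b]; exact ⟨rfl, rfl⟩
  · left; push_cast; rw [a, b]; exact ⟨neg_neg _, neg_neg _⟩

theorem aux_odd (g l : ℤ) (h : aux_H1 g l ∨ aux_H2 g l) : Odd g := by
  rcases Int.even_or_odd' g with ⟨j, hj | hj⟩
  · exfalso
    have key : ∀ j l : ZMod 4, 2*j*l ≠ 1 ∧ 2*j*l ≠ 3 := by decide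
    rw [hj] at h
    rcases h with ⟨h, -⟩ | ⟨h, -⟩
    · push_cast at h; exact (key _ _).1 h
    · push_cast at h; exact (key _ _).2 h
  · exact ⟨j, hj⟩

theorem aux_pair0 (K K' : Type) [Field K] [NumberField K] [Field K'] [NumberField K']
    (hK : Module.finrank ℚ K = 2) (hK' : Module.finrank ℚ K' = 2)
    (w : K) (w' : K') (g l : ℤ) (hl : l^2 = 5*g^2+4) (hg : 125 ∣ g) (hl5 : l % 5 = 2)
    (hpos : 0 < g*(5*g+2*l)) (hw : w^2 = ((-(g*(5*g+2*l)) : ℤ) : K))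
    (hw' : w'^2 = ((-(5*(g*(5*g+2*l))) : ℤ) : K'))
    (H : aux_H1 g l ∨ aux_H2 g l) :
    5 ∣ Nat.card (ClassGroup (𝓞 K)) ∧ 5 ∣ Nat.card (ClassGroup (𝓞 K')) := by
  have hodd := aux_odd g l H
  have hp : (∀ x : ℤ, 2*(x^5-10*x^3-(25*g+10*l)*x^2-(50*g^2+25*g*l+15)*x)
      - (125*g^3+55*g^2*l+50*g+4*l) ≠ 0) ∧
    (∀ A B : ℤ, A^4+3*A^2*B+B^2-10*(A^2+B)-(25*g+10*l)*A-(50*g^2+25*g*l+15) = 0 →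
      2*(A^3*B+2*A*B^2-10*A*B-(25*g+10*l)*B) - (125*g^3+55*g^2*l+50*g+4*l) = 0 → False) := by
    rcases H with ⟨h1, h2⟩ | ⟨h1, h2⟩
    · exact aux_mod_p_4 g l h1
    · exact aux_mod_p_61 g l h2
  have hm : (∀ x : ℤ, 2*(x^5-10*x^3-(25*g+10*l)*x^2-(50*g^2+25*g*l+15)*x)
      - (75*g^3+35*g^2*l+50*g+4*l) ≠ 0) ∧
    (∀ A B : ℤ, A^4+3*A^2*B+B^2-10*(A^2+B)-(25*g+10*l)*A-(50*g^2+25*g*l+15) = 0 →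
      2*(A^3*B+2*A*B^2-10*A*B-(25*g+10*l)*B) - (75*g^3+35*g^2*l+50*g+4*l) = 0 → False) := by
    rcases H with ⟨h1, h2⟩ | ⟨h1, h2⟩
    · exact aux_mod_m_31 g l h2
    · exact aux_mod_m_4 g l h1
  exact ⟨aux_inst_p K hK w g l hl hg hl5 hodd hpos hw hp.1 hp.2,
    aux_inst_m K' hK' w' g l hl hg hl5 hodd hpos hw' hm.1 hm.2⟩

theorem aux_pair (K K' : Type) [Field K] [NumberField K] [Field K'] [NumberField K']
    (hK : Module.finrank ℚ K = 2) (hK' : Module.finrank ℚ K' = 2)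
    (w : K) (w' : K') (g l d : ℤ) (hl : l^2 = 5*g^2+4) (hg : 125 ∣ g)
    (hd : d = -(g*(5*g+2*l))) (hneg : d < 0) (hw : w^2 = (d : K))
    (hw' : w'^2 = ((5*d : ℤ) : K'))
    (H : aux_H1 g l ∨ aux_H2 g l) :
    5 ∣ Nat.card (ClassGroup (𝓞 K)) ∧ 5 ∣ Nat.card (ClassGroup (𝓞 K')) := by
  have h5 : l % 5 = 2 ∨ l % 5 = 3 := by
    have h : (l^2) % 5 = 4 := by rw [hl]; omega
    have : l % 5 = 0 ∨ l % 5 = 1 ∨ l % 5 = 2 ∨ l % 5 = 3 ∨ l % 5 = 4 := by omega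
    rcases this with h' | h' | h' | h' | h' <;> simp [pow_two, Int.mul_emod, h'] at h ⊢
  have hd5 : 5*d = -(5*(g*(5*g+2*l))) := by rw [hd]; ring
  rcases h5 with h5 | h5
  · refine aux_pair0 K K' hK hK' w w' g l hl hg h5 (by linarith) ?_ ?_ H
    · rw [hw, hd]
    · rw [hw', hd5]
  · refine aux_pair0 K K' hK hK' w w' (-g) (-l) (by linear_combination hl) (by simpa using hg)
      (by omega) (by linarith) ?_ ?_ (H.imp (aux_H1_neg _ _) (aux_H2_neg _ _))
    · rw [hw, hd]; congr 1; ring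
    · rw [hw', hd5]; congr 1; ring

theorem aux_per (q : ℕ) (h0 : (Nat.fib 1499 : ZMod q) = 1) (h1 : (Nat.fib 1500 : ZMod q) = 0)
    (c j : ℕ) : (Nat.fib (c + 1500*j) : ZMod q) = Nat.fib c := by
  induction j with
  | zero => simp
  | succ j ih =>
    have : c + 1500*(j+1) = (c+1500*j) + 1499 + 1 := by ring
    rw [this, Nat.fib_add]
    push_cast
    rw [h0, h1, ih]
    ring

theorem aux_res (k : ℕ) (hk : ¬ 3 ∣ k) (f l : ℤ) (hf : f = Nat.fib (250*k))
    (hl : l = 2 * Nat.fib (250*k+1) - Nat.fib (250*k)) :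
    (aux_H1 f l ∨ aux_H2 f l) ∧ (aux_H1 (-f) l ∨ aux_H2 (-f) l) := by
  have p4 := aux_per 4 (by decide +kernel) (by decide +kernel)
  have p31 := aux_per 31 (by decide +kernel) (by decide +kernel)
  have p61 := aux_per 61 (by decide +kernel) (by decide +kernel)
  obtain ⟨r, hr, j, hj⟩ : ∃ r, (r = 1 ∨ r = 2 ∨ r = 4 ∨ r = 5) ∧ ∃ j, k = r + 6*j :=
    ⟨k % 6, by omega, k/6, by omega⟩
  have e1 : 250*k = 250*r + 1500*j := by omega
  have e2 : 250*k+1 = (250*r+1) + 1500*j := by omega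
  rw [e2, e1] at hl
  rw [e1] at hf
  subst hf hl
  unfold aux_H1 aux_H2
  push_cast
  rw [p4, p4, p31, p31, p61, p61]
  rcases hr with rfl | rfl | rfl | rfl <;> decide +kernel


open Polynomial in
theorem aux_field (c : ℂ) (d : ℤ) (hd : d < 0) (hc : c^2 = (d : ℂ)) :
    NumberField (IntermediateField.adjoin ℚ {c}) ∧
    Module.finrank ℚ (IntermediateField.adjoin ℚ {c}) = 2 ∧
    ∃ w : IntermediateField.adjoin ℚ {c}, w^2 = (d : IntermediateField.adjoin ℚ {c}) := by
  have hmon : (X^2 - C (d:ℚ) : ℚ[X]).Monic := monic_X_pow_sub_C _ (by norm_num)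
  have hroot : aeval c (X^2 - C (d:ℚ) : ℚ[X]) = 0 := by simp [hc]
  have hint : IsIntegral ℚ c := ⟨_, hmon, by simpa [aeval_def] using hroot⟩
  have hdeg : (X^2 - C (d:ℚ) : ℚ[X]).natDegree = 2 := natDegree_X_pow_sub_C
  have hirr : Irreducible (X^2 - C (d:ℚ) : ℚ[X]) := by
    rw [irreducible_iff_roots_eq_zero_of_degree_le_three (by omega) (by omega)]
    rw [Multiset.eq_zero_iff_forall_notMem]
    intro a ha
    have := (mem_roots'.1 ha).2
    simp only [IsRoot, eval_sub, eval_pow, eval_X, eval_C] at this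
    have h2 : (d:ℚ) < 0 := by exact_mod_cast hd
    nlinarith [sq_nonneg a]
  have hmin := minpoly.eq_of_irreducible_of_monic hirr hroot hmon
  have hfin := IntermediateField.adjoin.finrank hint
  rw [← hmin, hdeg] at hfin
  haveI : FiniteDimensional ℚ (IntermediateField.adjoin ℚ {c}) :=
    Module.finite_of_finrank_pos (by omega)
  refine ⟨⟨⟩, hfin, IntermediateField.AdjoinSimple.gen ℚ c, ?_⟩
  apply Subtype.ext
  push_cast
  rw [IntermediateField.AdjoinSimple.coe_gen]
  exact hc

theorem aux_fibid (N : ℕ) (hN : Even N) (hN0 : 2 ≤ N) (f l : ℤ) (hf : f = Nat.fib N)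
    (hl : l = 2 * Nat.fib (N+1) - Nat.fib N) :
    l^2 = 5*f^2+4 ∧ (Nat.fib (2*N+3) : ℤ) - 2 = f*(5*f+2*l) ∧
    (Nat.fib (2*N-3) : ℤ) - 2 = (-f)*(5*(-f)+2*l) := by
  have cas : ∀ m, (Nat.fib (2*m+1) : ℤ)^2 - Nat.fib (2*m) * Nat.fib (2*m+1) - (Nat.fib (2*m))^2 = 1 := by
    intro m
    induction m with
    | zero => simp
    | succ m ih =>
      have e1 : Nat.fib (2*(m+1)) = Nat.fib (2*m) + Nat.fib (2*m+1) := by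
        rw [show 2*(m+1) = 2*m+2 by ring, Nat.fib_add_two]
      have e2 : Nat.fib (2*(m+1)+1) = Nat.fib (2*m+1) + Nat.fib (2*(m+1)) := by
        rw [show 2*(m+1)+1 = (2*m+1)+2 by ring, Nat.fib_add_two, show 2*m+1+1 = 2*(m+1) by ring]
      rw [e2, e1]
      push_cast
      linear_combination ih
  obtain ⟨m, hm⟩ := hN
  have h := cas m
  rw [show 2*m = N by omega] at h
  have h0 : (Nat.fib (2*N) : ℤ) = f*l := by
    rw [Nat.fib_two_mul, hf, hl]
    have : Nat.fib N ≤ 2*Nat.fib (N+1) := by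
      have := Nat.fib_le_fib_succ (n := N); omega
    push_cast [this]
    ring
  have h1 : (Nat.fib (2*N+1) : ℤ) = (Nat.fib (N+1) : ℤ)^2 + f^2 := by
    rw [Nat.fib_two_mul_add_one, hf]; push_cast; ring
  have h3 : Nat.fib (2*N+3) = 2*Nat.fib (2*N+1) + Nat.fib (2*N) := by
    rw [show 2*N+3 = (2*N+1)+2 by ring, Nat.fib_add_two, show 2*N+1+1=2*N+2 by ring, Nat.fib_add_two]
    ring
  have h4 : Nat.fib (2*N-3) + 3*Nat.fib (2*N) = 2*Nat.fib (2*N+1) := by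
    obtain ⟨s, hs⟩ : ∃ s, 2*N = s+3 := ⟨2*N-3, by omega⟩
    rw [hs]
    simp only [Nat.add_sub_cancel]
    rw [show s+3+1 = (s+2)+2 by ring, show s+3 = (s+1)+2 by ring]
    simp only [Nat.fib_add_two, show s+1+2 = (s+1)+2 by ring, show s+2+1 = (s+1)+2 by ring,
      show s+1+1 = s+2 by ring]
    ring
  refine ⟨?_, ?_, ?_⟩
  · rw [hl, hf]; linear_combination 4*h
  · rw [h3]; push_cast; rw [h1, h0, hl, hf]; linear_combination 2*h
  · have h4' : (Nat.fib (2*N-3) : ℤ) = 2*Nat.fib (2*N+1) - 3*Nat.fib (2*N) := by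
      have : ((Nat.fib (2*N-3) + 3*Nat.fib (2*N) : ℕ) : ℤ) = (2*Nat.fib (2*N+1) : ℕ) := by rw [h4]
      push_cast at this; linarith
    rw [h4', h1, h0, hl, hf]; linear_combination 2*h

theorem aux_125 (k : ℕ) : (125:ℤ) ∣ Nat.fib (250*k) := by
  have h1 : Nat.fib 250 ∣ Nat.fib (250*k) := Nat.fib_dvd _ _ ⟨k, rfl⟩
  have h2 : 125 ∣ Nat.fib 250 := by decide +kernel
  exact_mod_cast h2.trans h1

theorem aux_part1 (n : ℕ) (hn : n % 500 = 3 ∨ n % 500 = 497) (h3 : ¬ 3 ∣ n) :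
    ∃ g l : ℤ, l^2 = 5*g^2+4 ∧ 125 ∣ g ∧ 2 - (Nat.fib n : ℤ) = -(g*(5*g+2*l)) ∧
      2 - (Nat.fib n : ℤ) < 0 ∧ (aux_H1 g l ∨ aux_H2 g l) := by
  have hneg : 2 - (Nat.fib n : ℤ) < 0 := by
    have : Nat.fib 4 ≤ Nat.fib n := Nat.fib_mono (by omega)
    rw [show Nat.fib 4 = 3 from rfl] at this
    omega
  rcases hn with hn | hn
  · obtain ⟨k, hk⟩ : ∃ k, n = 2*(250*k)+3 := ⟨n/500, by omega⟩
    have hk3 : ¬ 3 ∣ k := by omega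
    obtain ⟨a1, a2, a3⟩ := aux_fibid (250*k) ⟨125*k, by ring⟩ (by omega) _ _ rfl rfl
    obtain ⟨r1, r2⟩ := aux_res k hk3 _ _ rfl rfl
    refine ⟨_, _, a1, aux_125 k, ?_, hneg, r1⟩
    rw [hk, ← a2]; ring
  · obtain ⟨k, hk⟩ : ∃ k, n = 2*(250*k)-3 := ⟨n/500+1, by omega⟩
    have hk3 : ¬ 3 ∣ k := by omega
    obtain ⟨a1, a2, a3⟩ := aux_fibid (250*k) ⟨125*k, by ring⟩ (by omega) _ _ rfl rfl
    obtain ⟨r1, r2⟩ := aux_res k hk3 _ _ rfl rfl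
    refine ⟨_, _, ?_, (dvd_neg).2 (aux_125 k), ?_, hneg, r2⟩
    · rw [a1]; ring
    · rw [hk, ← a3]; ring

theorem aux_first (n : ℕ) (hn : n % 500 = 3 ∨ n % 500 = 497) (h3 : ¬ 3 ∣ n) (c c' : ℂ)
    (hc : c ^ 2 = ((2 - (Nat.fib n : ℤ) : ℤ) : ℂ))
    (hc' : c' ^ 2 = ((5 * (2 - (Nat.fib n : ℤ)) : ℤ) : ℂ)) :
    5 ∣ Nat.card (ClassGroup (𝓞 (IntermediateField.adjoin ℚ {c}))) ∧
    5 ∣ Nat.card (ClassGroup (𝓞 (IntermediateField.adjoin ℚ {c'}))) := by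
  obtain ⟨g, l, b1, b2, b3, b4, b5⟩ := aux_part1 n hn h3
  obtain ⟨i1, i2, w, hw⟩ := aux_field c _ b4 hc
  obtain ⟨j1, j2, w', hw'⟩ := aux_field c' _ (by linarith) hc'
  exact aux_pair _ _ i2 j2 w w' g l _ b1 b2 b3 b4 hw hw' b5


theorem aux_sq (c c0 : ℂ) (x y : ℤ) (hx : x < 0) (hy : y < 0) (hc : c^2 = (x:ℂ)) (hc0 : c0^2 = (y:ℂ))
    (h : c ∈ IntermediateField.adjoin ℚ {c0}) : ∃ b : ℚ, (x:ℚ) = b^2*y := by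
  have hint : IsIntegral ℚ c0 :=
    ⟨Polynomial.X^2 - Polynomial.C (y:ℚ), Polynomial.monic_X_pow_sub_C _ (by norm_num), by
      rw [Polynomial.eval₂_sub, Polynomial.eval₂_pow, Polynomial.eval₂_X, Polynomial.eval₂_C]; simp [hc0]⟩
  have h1 : c ∈ Algebra.adjoin ℚ {c0} := by
    rw [← IntermediateField.adjoin_simple_toSubalgebra_of_isAlgebraic hint.isAlgebraic]
    exact h
  have h2 : ∃ a b : ℚ, c = a + b*c0 := by
    clear h hc
    induction h1 using Algebra.adjoin_induction with
    | mem z hz => exact ⟨0, 1, by simp only [Set.mem_singleton_iff] at hz; simp [hz]⟩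
    | algebraMap r => exact ⟨r, 0, by simp⟩
    | add u v _ _ hu hv =>
      obtain ⟨a, b, rfl⟩ := hu
      obtain ⟨a', b', rfl⟩ := hv
      exact ⟨a+a', b+b', by push_cast; ring⟩
    | mul u v _ _ hu hv =>
      obtain ⟨a, b, rfl⟩ := hu
      obtain ⟨a', b', rfl⟩ := hv
      exact ⟨a*a'+b*b'*y, a*b'+b*a', by push_cast; linear_combination (b*b':ℂ)*hc0⟩
  obtain ⟨a, b, hab⟩ := h2
  have hxq : (x:ℚ) < 0 := by exact_mod_cast hx
  have hyq : (y:ℚ) < 0 := by exact_mod_cast hy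
  have e : (x:ℂ) = a^2 + b^2*y + 2*a*b*c0 := by
    rw [← hc, hab]; linear_combination (b^2:ℂ)*hc0
  by_cases h0 : a*b = 0
  · have h0' : (a:ℂ)*b = 0 := by exact_mod_cast h0
    have e2 : (x:ℂ) = a^2 + b^2*y := by rw [e]; linear_combination 2*c0*h0'
    have e3 : (x:ℚ) = a^2 + b^2*y := by exact_mod_cast e2
    rcases mul_eq_zero.1 h0 with h' | h'
    · exact ⟨b, by rw [e3, h']; ring⟩
    · exfalso; rw [h'] at e3; nlinarith [sq_nonneg a]
  · exfalso
    have h0' : (a:ℂ)*b ≠ 0 := by exact_mod_cast h0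
    have e2 : c0 = ((((x:ℚ) - a^2 - b^2*y)/(2*(a*b)) : ℚ) : ℂ) := by
      push_cast
      rw [eq_div_iff (mul_ne_zero two_ne_zero h0')]
      linear_combination -e
    rw [e2] at hc0
    have e3 : (((x:ℚ) - a^2 - b^2*y)/(2*(a*b)))^2 = (y:ℚ) := by exact_mod_cast hc0
    nlinarith [sq_nonneg (((x:ℚ) - a^2 - b^2*y)/(2*(a*b)))]

theorem aux_fibmul (m k : ℕ) : ((Nat.fib m : ℤ) ∣ Nat.fib (m*k+1) - (Nat.fib (m+1))^k) ∧
    (Nat.fib m : ℤ)^2 ∣ Nat.fib (m*(k+1)) - (k+1)*Nat.fib m*(Nat.fib (m+1))^k := by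
  rcases Nat.eq_zero_or_pos m with rfl | hm
  · simp
  obtain ⟨s, rfl⟩ : ∃ s, m = s+1 := ⟨m-1, by omega⟩
  have hs : (Nat.fib s : ℤ) = Nat.fib (s+1+1) - Nat.fib (s+1) := by
    rw [show s+1+1 = s+2 by ring, Nat.fib_add_two]; push_cast; ring
  induction k with
  | zero => simp
  | succ k ih =>
    obtain ⟨⟨u, hu⟩, ⟨v, hv⟩⟩ := ih
    have e1 : (Nat.fib ((s+1)*(k+1)+1) : ℤ) = Nat.fib ((s+1)*k+1) * Nat.fib (s+1+1) +
        Nat.fib ((s+1)*k) * Nat.fib (s+1) := by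
      rw [show (s+1)*(k+1)+1 = (s+1)*k + (s+1) + 1 by ring, Nat.fib_add]; push_cast; ring
    have e2 : (Nat.fib ((s+1)*(k+1+1)) : ℤ) = Nat.fib ((s+1)*(k+1)) * Nat.fib s +
        Nat.fib ((s+1)*(k+1)+1) * Nat.fib (s+1) := by
      rw [show (s+1)*(k+1+1) = (s+1)*(k+1) + s + 1 by ring, Nat.fib_add]; push_cast; ring
    have first : (Nat.fib (s+1) : ℤ) ∣ Nat.fib ((s+1)*(k+1)+1) - (Nat.fib (s+1+1))^(k+1) := by
      refine ⟨u*Nat.fib (s+1+1) + Nat.fib ((s+1)*k), ?_⟩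
      rw [e1]; linear_combination (Nat.fib (s+1+1) : ℤ)*hu
    refine ⟨first, ?_⟩
    obtain ⟨t, ht⟩ := first
    refine ⟨v*Nat.fib s - (k+1)*(Nat.fib (s+1+1))^k + t, ?_⟩
    rw [e2]
    push_cast
    linear_combination (Nat.fib s : ℤ)*hv + (Nat.fib (s+1) : ℤ)*ht +
      (k+1)*(Nat.fib (s+1):ℤ)*(Nat.fib (s+1+1))^k * hs

theorem aux_lift (m p : ℕ) (hp : p.Prime) (hm : 0 < m) (h : 2 ≤ padicValInt p (Nat.fib m)) :
    padicValInt p (Nat.fib (m*p)) = padicValInt p (Nat.fib m) + 1 := by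
  haveI := Fact.mk hp
  have hF0 : (Nat.fib m : ℤ) ≠ 0 := by
    have := Nat.fib_pos.2 hm; omega
  have hp2 : ((p:ℤ)^2) ∣ Nat.fib m := (padicValInt_dvd_iff 2 _).2 (Or.inr h)
  obtain ⟨w, hw⟩ := hp2
  obtain ⟨s, hs⟩ := (aux_fibmul m (p-1)).2
  have hp1 : p - 1 + 1 = p := by have := hp.pos; omega
  have hp1' : ((p-1:ℕ):ℤ) + 1 = p := by exact_mod_cast hp1
  rw [hp1, hp1'] at hs
  have hpz : Prime (p:ℤ) := Nat.prime_iff_prime_int.1 hp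
  obtain ⟨U, hU⟩ : ∃ U : ℤ, U = (Nat.fib (m+1) : ℤ)^(p-1) + p*w*s := ⟨_, rfl⟩
  have e : (Nat.fib (m*p) : ℤ) = Nat.fib m * (p * U) := by
    rw [hU]
    linear_combination hs + (Nat.fib m : ℤ)*s*hw
  have hUnd : ¬ (p:ℤ) ∣ U := by
    intro hd
    have h1 : (p:ℤ) ∣ (Nat.fib (m+1) : ℤ)^(p-1) := by
      have : (Nat.fib (m+1) : ℤ)^(p-1) = U - p*(w*s) := by rw [hU]; ring
      rw [this]; exact dvd_sub hd (dvd_mul_right _ _)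
    have h2 : p ∣ Nat.fib (m+1) := by exact_mod_cast hpz.dvd_of_dvd_pow h1
    have h3 : p ∣ Nat.fib m := by
      have : (p:ℤ) ∣ Nat.fib m := ⟨p*w, by rw [hw]; ring⟩
      exact_mod_cast this
    exact Nat.not_coprime_of_dvd_of_dvd hp.one_lt h3 h2 (Nat.fib_coprime_fib_succ m)
  have hU0 : U ≠ 0 := by rintro rfl; simp at hUnd
  rw [e, padicValInt.mul hF0 (mul_ne_zero hpz.ne_zero hU0), padicValInt.mul hpz.ne_zero hU0,
    padicValInt.eq_zero_of_not_dvd hUnd, padicValInt.self hp.one_lt]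

theorem aux_prime (M : ℕ) (hM : M ≠ 0) : ∃ q p : ℕ, q.Prime ∧ 5 < q ∧ p.Prime ∧ p ∣ Nat.fib q ∧
    ¬ p ∣ M ∧ p ≠ 2 ∧ p ≠ 3 := by
  have hcop : ∀ q r p : ℕ, Nat.Coprime q r → p.Prime → p ∣ Nat.fib q → p ∣ Nat.fib r → False := by
    intro q r p h hp h1 h2
    have := Nat.dvd_gcd h1 h2
    rw [← Nat.fib_gcd, h] at this
    simp at this
    exact hp.one_lt.ne' this
  have hpr : ∀ q, q.Prime → 5 < q → (Nat.fib q).minFac.Prime := by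
    intro q hq h5
    apply Nat.minFac_prime
    have : Nat.fib 3 ≤ Nat.fib q := Nat.fib_mono (by omega)
    rw [show Nat.fib 3 = 2 from rfl] at this
    omega
  have hinf : {q : ℕ | q.Prime ∧ 5 < q}.Infinite := by
    rw [Set.infinite_iff_exists_gt]
    intro a
    obtain ⟨q, h1, h2⟩ := Nat.exists_infinite_primes (a+6)
    exact ⟨q, ⟨h2, by omega⟩, by omega⟩
  have hinj : Set.InjOn (fun q => (Nat.fib q).minFac) {q : ℕ | q.Prime ∧ 5 < q} := by
    intro q hq r hr h
    by_contra hne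
    have h' : (Nat.fib q).minFac = (Nat.fib r).minFac := h
    refine hcop q r _ ((Nat.coprime_primes hq.1 hr.1).2 hne) (hpr q hq.1 hq.2) (Nat.minFac_dvd _) ?_
    rw [h']; exact Nat.minFac_dvd _
  obtain ⟨p, ⟨q, ⟨hq, h5⟩, rfl⟩, hp⟩ := (hinf.image hinj).exists_notMem_finset M.primeFactors
  simp only at hp ⊢
  have hpp := hpr q hq h5
  have hdv := Nat.minFac_dvd (Nat.fib q)
  refine ⟨q, _, hq, h5, hpp, hdv, ?_, ?_, ?_⟩
  · intro hd; exact hp (Nat.mem_primeFactors.2 ⟨hpp, hd, hM⟩)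
  · intro h
    refine hcop q 3 _ ((Nat.coprime_primes hq Nat.prime_three).2 (by omega)) hpp hdv ?_
    rw [h]; decide
  · intro h
    have : Nat.Coprime q (2^2) :=
      Nat.Coprime.pow_right 2 ((Nat.coprime_primes hq Nat.prime_two).2 (by omega))
    refine hcop q 4 _ this hpp hdv ?_
    rw [h]; decide

theorem aux_oddval (M : ℕ) (hM : M ≠ 0) : ∃ n p : ℕ, n % 500 = 3 ∧ ¬ 3 ∣ n ∧ p.Prime ∧ ¬ p ∣ M ∧
    Odd (padicValInt p (2 - (Nat.fib n : ℤ))) := by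
  obtain ⟨q, p, hq, h5, hp, hpq, hpM, hp2, hp3⟩ := aux_prime M hM
  haveI := Fact.mk hp
  have hpz : Prime (p:ℤ) := Nat.prime_iff_prime_int.1 hp
  have h3q : ¬ 3 ∣ q := by
    rw [Nat.prime_dvd_prime_iff_eq Nat.prime_three hq]; omega
  have h3p : ¬ 3 ∣ p := by
    rw [Nat.prime_dvd_prime_iff_eq Nat.prime_three hp]; omega
  have hpF : ∀ k, q ∣ k → p ∣ Nat.fib (250*k) := fun k hk =>
    hpq.trans (Nat.fib_dvd _ _ (hk.mul_left 250))
  obtain ⟨k, hk0, hqk, h3k, hodd⟩ : ∃ k, 0 < k ∧ q ∣ k ∧ ¬ 3 ∣ k ∧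
      Odd (padicValInt p (Nat.fib (250*k))) := by
    rcases Nat.even_or_odd (padicValInt p (Nat.fib (250*q))) with he | ho
    · have hne : padicValInt p (Nat.fib (250*q)) ≠ 0 := by
        have h0 : Nat.fib (250*q) ≠ 0 := (Nat.fib_pos.2 (by omega)).ne'
        have h1 : (p:ℤ)^1 ∣ Nat.fib (250*q) := by
          rw [pow_one]; exact_mod_cast hpF q dvd_rfl
        rw [padicValInt_dvd_iff] at h1
        rcases h1 with h1 | h1
        · exact absurd (by exact_mod_cast h1) h0
        · omega
      refine ⟨q*p, Nat.mul_pos hq.pos hp.pos, dvd_mul_right _ _, ?_, ?_⟩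
      · rw [Nat.prime_three.dvd_mul]; tauto
      · rw [← mul_assoc, aux_lift (250*q) p hp (by omega) (by
          obtain ⟨i, hi⟩ := he; omega)]
        exact he.add_one
    · exact ⟨q, hq.pos, dvd_rfl, h3q, ho⟩
  refine ⟨2*(250*k)+3, p, by omega, by omega, hp, hpM, ?_⟩
  obtain ⟨a1, a2, -⟩ := aux_fibid (250*k) ⟨125*k, by ring⟩ (by omega) _ _ rfl rfl
  obtain ⟨l, hl⟩ : ∃ l : ℤ, l = 2 * Nat.fib (250*k+1) - Nat.fib (250*k) := ⟨_, rfl⟩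
  obtain ⟨f, hf⟩ : ∃ f : ℤ, f = Nat.fib (250*k) := ⟨_, rfl⟩
  rw [← hl, ← hf] at a1 a2
  rw [← hf] at hodd
  have hpf : (p:ℤ) ∣ f := by rw [hf]; exact_mod_cast hpF k hqk
  have hf0 : f ≠ 0 := by
    have := Nat.fib_pos.2 (show 0 < 250*k by omega); omega
  have hp2' : ¬ (p:ℤ) ∣ 2 := by
    intro h
    have : p ∣ 2 := by exact_mod_cast h
    exact hp2 ((Nat.prime_dvd_prime_iff_eq hp Nat.prime_two).1 this)
  have hnd : ¬ (p:ℤ) ∣ -(5*f+2*l) := by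
    intro h
    have h1 : (p:ℤ) ∣ 2*l := by
      have : 2*l = -(-(5*f+2*l)) - 5*f := by ring
      rw [this]; exact dvd_sub (dvd_neg.2 h) (hpf.mul_left 5)
    rcases hpz.dvd_or_dvd h1 with h2 | h2
    · exact hp2' h2
    · have h3 : (p:ℤ) ∣ 2*2 := by
        have : (2*2:ℤ) = l*l - f*(5*f) := by linear_combination -a1
        rw [this]; exact dvd_sub (h2.mul_left l) (hpf.mul_right _)
      rcases hpz.dvd_or_dvd h3 with h4 | h4 <;> exact hp2' h4
  have hne : -(5*f+2*l) ≠ 0 := by intro h; rw [h] at hnd; simp at hnd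
  have e : 2 - (Nat.fib (2*(250*k)+3) : ℤ) = f * (-(5*f+2*l)) := by linear_combination -a2
  rw [e, padicValInt.mul hf0 hne, padicValInt.eq_zero_of_not_dvd hnd, add_zero]
  exact hodd

open IntermediateField

theorem stmt_2 :
    (∀ n : ℕ, (n % 500 = 3 ∨ n % 500 = 497) → ¬(3 ∣ n) →
      ∀ c c' : ℂ, c ^ 2 = ((2 - (Nat.fib n : ℤ) : ℤ) : ℂ) →
        c' ^ 2 = ((5 * (2 - (Nat.fib n : ℤ)) : ℤ) : ℂ) →
        5 ∣ Nat.card (ClassGroup (NumberField.RingOfIntegers ℚ⟮c⟯)) ∧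
        5 ∣ Nat.card (ClassGroup (NumberField.RingOfIntegers ℚ⟮c'⟯))) ∧
    {KK' : IntermediateField ℚ ℂ × IntermediateField ℚ ℂ |
      ∃ n : ℕ, (n % 500 = 3 ∨ n % 500 = 497) ∧ ¬(3 ∣ n) ∧
        ∃ c c' : ℂ, c ^ 2 = ((2 - (Nat.fib n : ℤ) : ℤ) : ℂ) ∧
          c' ^ 2 = ((5 * (2 - (Nat.fib n : ℤ)) : ℤ) : ℂ) ∧
          KK'.1 = ℚ⟮c⟯ ∧ KK'.2 = ℚ⟮c'⟯}.Infinite := by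
  refine ⟨fun n hn h3 c c' hc hc' => aux_first n hn h3 c c' hc hc', ?_⟩
  intro hfin
  have hneg : ∀ n : ℕ, (n % 500 = 3 ∨ n % 500 = 497) → ¬(3 ∣ n) → 2 - (Nat.fib n : ℤ) < 0 := by
    intro n hn h3
    obtain ⟨g, l, -, -, -, h, -⟩ := aux_part1 n hn h3
    exact h
  have hch : ∀ KK' : IntermediateField ℚ ℂ × IntermediateField ℚ ℂ, ∃ n : ℕ, KK' ∈ hfin.toFinset →
      (n % 500 = 3 ∨ n % 500 = 497) ∧ ¬(3 ∣ n) ∧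
        ∃ c : ℂ, c ^ 2 = ((2 - (Nat.fib n : ℤ) : ℤ) : ℂ) ∧ KK'.1 = ℚ⟮c⟯ := by
    intro KK'
    by_cases h : KK' ∈ hfin.toFinset
    · obtain ⟨n, h1, h2, c, c', h3, h4, h5, h6⟩ := hfin.mem_toFinset.1 h
      exact ⟨n, fun _ => ⟨h1, h2, c, h3, h5⟩⟩
    · exact ⟨0, fun h' => absurd h' h⟩
  choose φ hφ using hch
  have hM : ∏ x ∈ hfin.toFinset, (2 - (Nat.fib (φ x) : ℤ)).natAbs ≠ 0 := by
    rw [Finset.prod_ne_zero_iff]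
    intro x hx
    obtain ⟨h1, h2, -⟩ := hφ x hx
    have := hneg _ h1 h2
    omega
  obtain ⟨n, p, hn, h3, hp, hpM, hodd⟩ := aux_oddval _ hM
  haveI := Fact.mk hp
  obtain ⟨c, hc⟩ := IsAlgClosed.exists_pow_nat_eq (((2 - (Nat.fib n : ℤ) : ℤ) : ℂ)) (n := 2) (by norm_num)
  obtain ⟨c', hc'⟩ := IsAlgClosed.exists_pow_nat_eq (((5 * (2 - (Nat.fib n : ℤ)) : ℤ) : ℂ)) (n := 2) (by norm_num)
  have hmem : ((ℚ⟮c⟯, ℚ⟮c'⟯) : IntermediateField ℚ ℂ × IntermediateField ℚ ℂ) ∈ hfin.toFinset :=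
    hfin.mem_toFinset.2 ⟨n, Or.inl hn, h3, c, c', hc, hc', rfl, rfl⟩
  obtain ⟨i1, i2, c0, hc0, hEq⟩ := hφ _ hmem
  have hp0 : ¬ (p:ℤ) ∣ 2 - (Nat.fib (φ (ℚ⟮c⟯, ℚ⟮c'⟯)) : ℤ) := by
    intro h
    exact hpM ((Int.natCast_dvd.1 h).trans (Finset.dvd_prod_of_mem _ hmem))
  have hx := hneg n (Or.inl hn) h3
  have hy := hneg _ i1 i2
  have hcm : c ∈ ℚ⟮c0⟯ := by
    have h1 : c ∈ ℚ⟮c⟯ := mem_adjoin_simple_self ℚ c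
    have h2 : ℚ⟮c⟯ = ℚ⟮c0⟯ := hEq
    rw [← h2]; exact h1
  obtain ⟨b, hb⟩ := aux_sq c c0 _ _ hx hy hc hc0 hcm
  generalize 2 - (Nat.fib (φ (ℚ⟮c⟯, ℚ⟮c'⟯)) : ℤ) = y at *
  generalize 2 - (Nat.fib n : ℤ) = x at *
  have hb0 : b ≠ 0 := by
    rintro rfl
    have : (x:ℚ) = 0 := by rw [hb]; ring
    have : x = 0 := by exact_mod_cast this
    omega
  have hy0 : (y:ℚ) ≠ 0 := by exact_mod_cast hy.ne
  have hv := congrArg (padicValRat p) hb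
  rw [padicValRat.mul (pow_ne_zero 2 hb0) hy0, padicValRat.pow, padicValRat.of_int,
    padicValRat.of_int, padicValInt.eq_zero_of_not_dvd hp0] at hv
  obtain ⟨i, hi⟩ := hodd
  rw [hi] at hv
  push_cast at hv
  omega
end

section
/- Let p be a prime with p ≡ 5 (mod 8), let ι be a primitive root modulo p, and let A, B be integers with p = A² + B², A ≡ −1 (mod 4), and B ≡ A·ι^{(p−1)/4} (mod p). Let ζ = exp(2πi/p) and, for j = 0, 1, 2, 3, set S_j = Σ ζ^{ι^k}, the sum over those k with 0 ≤ k ≤ p − 2 and k ≡ j (mod 4). Then, as identities of complex numbers: (S₀ − S₂)² = (A√p − p)/2, (S₁ − S₃)² = −(A√p + p)/2, and (S₀ − S₂)(S₁ − S₃) = B√p/2. -/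
open Polynomial Finset

lemma aux_sum_eval (p : ℕ) [Fact p.Prime] (f : (ZMod p)[X]) (hf : f.natDegree ≤ p - 1) :
    ∑ x : ZMod p, f.eval x = - f.coeff (p - 1) := by
  have hp := (Fact.out : p.Prime).two_le
  have h : ∀ x : ZMod p, f.eval x = ∑ i ∈ range (p - 1 + 1), f.coeff i * x ^ i := fun x =>
    eval_eq_sum_range' (by omega) x
  simp_rw [h]
  rw [sum_comm]
  simp_rw [← mul_sum]
  rw [sum_range_succ, sum_eq_zero, zero_add]
  · have : ∑ x : ZMod p, x ^ (p - 1) = -1 := by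
      have h1 : ∀ x : ZMod p, x ^ (p - 1) = 1 - if x = 0 then 1 else 0 := by
        intro x
        split_ifs with hx
        · subst hx; rw [zero_pow (by omega)]; simp
        · simp [ZMod.pow_card_sub_one_eq_one hx]
      simp_rw [h1]
      simp
    rw [this]; ring
  · intro i hi
    rw [FiniteField.sum_pow_lt_card_sub_one, mul_zero]
    simpa [ZMod.card] using hi

lemma aux_range {M : Type*} [AddCommMonoid M] (p : ℕ) [NeZero p] (F : ZMod p → M) :
    ∑ j ∈ range p, F (j : ZMod p) = ∑ x, F x := by
  refine sum_bij' (fun j _ => (j : ZMod p)) (fun x _ => x.val) ?_ ?_ ?_ ?_ ?_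
  · simp
  · intro x _; exact mem_range.2 x.val_lt
  · intro j hj; exact ZMod.val_cast_of_lt (mem_range.1 hj)
  · simp
  · simp

lemma aux_legendre_sum (p m : ℕ) [Fact p.Prime] (hm : p = 2 * m + 1) :
    ∑ j ∈ range p, ((legendreSym p j : ℤ) : ZMod p) * (j.choose m : ZMod p) * (m.factorial : ZMod p) = -1 := by
  have h := aux_sum_eval p (X ^ m * descPochhammer (ZMod p) m) (by
    rw [(monic_X_pow m).natDegree_mul (monic_descPochhammer _ _)]
    simp [descPochhammer_natDegree]; omega)
  have hmon : (X ^ m * descPochhammer (ZMod p) m).Monic :=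
    (monic_X_pow m).mul (monic_descPochhammer _ _)
  have hc : (X ^ m * descPochhammer (ZMod p) m).coeff (p - 1) = 1 := by
    have : p - 1 = (X ^ m * descPochhammer (ZMod p) m).natDegree := by
      rw [(monic_X_pow m).natDegree_mul (monic_descPochhammer _ _)]
      simp [descPochhammer_natDegree]; omega
    rw [this]; exact hmon
  rw [hc] at h
  rw [← h]
  rw [← aux_range]
  refine sum_congr rfl fun j _ => ?_
  rw [eval_mul, eval_pow, eval_X]
  rw [descPochhammer_eval_eq_descFactorial, legendreSym.eq_pow, Nat.descFactorial_eq_factorial_mul_choose,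
    show p/2 = m by omega]
  push_cast; ring

lemma aux_prod_coeff {R : Type*} [CommRing R] (f : ℕ → R[X]) (m : ℕ) (h : ∀ k < m, (f k).coeff 0 = 0) :
    (∏ k ∈ range m, f k).coeff m = ∏ k ∈ range m, (f k).coeff 1 := by
  have : ∏ k ∈ range m, f k = (∏ k ∈ range m, (f k).divX) * X ^ m := by
    rw [show (X : R[X]) ^ m = ∏ k ∈ range m, X by simp, ← prod_mul_distrib]
    refine prod_congr rfl fun k hk => ?_
    conv_lhs => rw [← divX_mul_X_add (f k), h k (mem_range.1 hk)]
    simp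
  rw [this, coeff_mul_X_pow', if_pos le_rfl, Nat.sub_self, coeff_zero_eq_eval_zero, eval_prod]
  refine prod_congr rfl fun k _ => ?_
  rw [← coeff_zero_eq_eval_zero, coeff_divX]

lemma aux_vanish (p : ℕ) [Fact p.Prime] (ζ : ℂ) (hζ : IsPrimitiveRoot ζ p) (D : ℤ[X])
    (hD : aeval ζ D = 0) (m : ℕ) (hm : m < p - 1) :
    ((D.map (Int.castRingHom (ZMod p))).comp (X + 1)).coeff m = 0 := by
  have hp := (Fact.out : p.Prime)
  have h1 : cyclotomic p ℤ ∣ D := by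
    rw [cyclotomic_eq_minpoly hζ hp.pos]
    exact minpoly.isIntegrallyClosed_dvd (hζ.isIntegral hp.pos) hD
  obtain ⟨E, rfl⟩ := h1
  have h2 : cyclotomic p (ZMod p) = (X - 1) ^ (p - 1) := by
    have h3 : cyclotomic p (ZMod p) * (X - 1) = (X - 1) ^ (p - 1) * (X - 1) := by
      rw [cyclotomic_prime_mul_X_sub_one, ← pow_succ, Nat.sub_add_cancel hp.one_le, sub_pow_char]
      simp
    exact mul_right_cancel₀ (X_sub_C_ne_zero (1 : ZMod p)) (by simpa using h3)
  rw [Polynomial.map_mul, map_cyclotomic, h2, mul_comp, pow_comp, sub_comp, X_comp, one_comp,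
    add_sub_cancel_right, mul_comm, coeff_mul_X_pow', if_neg (by omega)]

lemma aux_fact_sq (p m : ℕ) [Fact p.Prime] (hm : p = 2 * m + 1) (hev : Even m) :
    ((m.factorial : ZMod p)) ^ 2 = -1 := by
  have h := ZMod.wilsons_lemma p
  have hr : (∏ k ∈ range m, ((m + (m - 1 - k) + 1 : ℕ) : ZMod p)) = ∏ k ∈ range m, ((m + k + 1 : ℕ) : ZMod p) :=
    prod_range_reflect (fun k => ((m + k + 1 : ℕ) : ZMod p)) m
  have hr2 : (∏ k ∈ range m, ((m + (m - 1 - k) + 1 : ℕ) : ZMod p)) = ∏ k ∈ range m, (-1) * ((k + 1 : ℕ) : ZMod p) := by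
    refine prod_congr rfl fun k hk => ?_
    have hk := mem_range.1 hk
    have : (m + (m - 1 - k) + 1) + (k + 1) = p := by omega
    have h2 : ((m + (m - 1 - k) + 1 : ℕ) : ZMod p) + ((k + 1 : ℕ) : ZMod p) = 0 := by
      rw [← Nat.cast_add, this]; simp
    linear_combination h2
  rw [prod_mul_distrib, prod_const, card_range, hev.neg_one_pow, one_mul] at hr2
  rw [show p - 1 = m + m by omega, ← prod_range_add_one_eq_factorial, prod_range_add] at h
  push_cast at h
  push_cast at hr hr2
  rw [← hr, hr2] at h
  rw [← prod_range_add_one_eq_factorial]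
  push_cast
  rw [sq, h]

lemma aux_two_pow (p m : ℕ) [Fact p.Prime] (hm : p = 2 * m + 1) (hp8 : p % 8 = 5) :
    (2 : ZMod p) ^ m = -1 := by
  have hns : ¬ IsSquare (2 : ZMod p) := by
    rw [ZMod.exists_sq_eq_two_iff (by omega)]; omega
  have h2 : (2 : ZMod p) ≠ 0 := fun h => hns (h ▸ ⟨0, by simp⟩)
  rw [ZMod.euler_criterion p h2] at hns
  have := ZMod.pow_div_two_eq_neg_one_or_one p h2
  rw [show p / 2 = m by omega] at *
  tauto

lemma aux_coeff (p m : ℕ) [Fact p.Prime] (hm : p = 2 * m + 1) (ζ : ℂ) (hζ : IsPrimitiveRoot ζ p) (hm0 : 0 < m)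
    (h : ∑ j ∈ range p, ((legendreSym p j : ℤ) : ℂ) * ζ ^ j =
      ∏ k ∈ range m, (ζ ^ (k + 1) - ζ ^ (p - (k + 1)))) :
    (2 : ZMod p) ^ m * (m.factorial : ZMod p) ^ 2 = -1 := by
  have hv := aux_vanish p ζ hζ (∑ j ∈ range p, C (legendreSym p j : ℤ) * X ^ j -
    ∏ k ∈ range m, (X ^ (k + 1) - X ^ (p - (k + 1)))) (by
      simp only [map_sub, map_sum, map_prod, map_mul, map_pow, aeval_X, aeval_C]
      simpa [sub_eq_zero] using h) m (by omega)
  rw [Polynomial.map_sub, sub_comp, coeff_sub, Polynomial.map_prod, Polynomial.prod_comp, aux_prod_coeff] at hv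
  · have hl := aux_legendre_sum p m hm
    rw [← sum_mul] at hl
    have e1 : ((Polynomial.map (Int.castRingHom (ZMod p)) (∑ j ∈ range p, C (legendreSym p j : ℤ) * X ^ j)).comp (X + 1)).coeff m = ∑ j ∈ range p, ((legendreSym p j : ℤ) : ZMod p) * (j.choose m : ZMod p) := by
      rw [Polynomial.map_sum, comp, eval₂_finsetSum, finsetSum_coeff]
      refine sum_congr rfl fun j _ => ?_
      rw [← comp]
      simp only [Polynomial.map_mul, Polynomial.map_pow, map_X, map_C, mul_comp, pow_comp, X_comp, C_comp, coeff_C_mul, coeff_X_add_one_pow]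
      simp
    have e2 : ∀ k ∈ range m, ((Polynomial.map (Int.castRingHom (ZMod p)) (X ^ (k + 1) - X ^ (p - (k + 1)))).comp (X + 1)).coeff 1 = 2 * ((k + 1 : ℕ) : ZMod p) := by
      intro k hk
      have hk := mem_range.1 hk
      simp only [Polynomial.map_sub, Polynomial.map_pow, map_X, sub_comp, pow_comp, X_comp, coeff_sub, coeff_X_add_one_pow, Nat.choose_one_right]
      rw [Nat.cast_sub (by omega)]
      simp; ring
    rw [e1, prod_congr rfl e2, prod_mul_distrib, prod_const, card_range, ← Nat.cast_prod, prod_range_add_one_eq_factorial] at hv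
    linear_combination hl - (m.factorial : ZMod p) * hv
  · intro k hk
    simp only [Polynomial.map_sub, Polynomial.map_pow, map_X, sub_comp, pow_comp, X_comp, coeff_sub, coeff_X_add_one_pow]
    simp

lemma aux_P_sq (p m : ℕ) [Fact p.Prime] (hm : p = 2 * m + 1) (hev : Even m) (ζ : ℂ) (hζ : IsPrimitiveRoot ζ p) :
    (∏ k ∈ range m, (ζ ^ (k + 1) - ζ ^ (p - (k + 1)))) ^ 2 = p := by
  have hp := (Fact.out : p.Prime)
  have h2 : IsPrimitiveRoot (ζ ^ 2) (m + m + 1) := by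
    rw [show m + m + 1 = p by omega]
    exact hζ.pow_of_coprime 2 (Nat.coprime_two_left.2 ⟨m, hm⟩)
  have h := h2.prod_one_sub_pow_eq_order
  rw [prod_range_add, ← prod_range_reflect (fun k => 1 - (ζ ^ 2) ^ (m + k + 1)), ← prod_mul_distrib] at h
  rw [← prod_pow]
  have : ∀ k ∈ range m, (ζ ^ (k + 1) - ζ ^ (p - (k + 1))) ^ 2 = (-1) * ((1 - (ζ ^ 2) ^ (k + 1)) * (1 - (ζ ^ 2) ^ (m + (m - 1 - k) + 1))) := by
    intro k hk
    have hk := mem_range.1 hk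
    rw [show m + (m - 1 - k) + 1 = p - (k + 1) by omega]
    have h1 : ζ ^ (k + 1) * ζ ^ (p - (k + 1)) = 1 := by
      rw [← pow_add, show k + 1 + (p - (k + 1)) = p by omega, hζ.pow_eq_one]
    rw [← pow_mul, ← pow_mul, mul_comm 2, mul_comm 2, pow_mul, pow_mul]
    generalize ζ ^ (k + 1) = a at *
    generalize ζ ^ (p - (k + 1)) = b at *
    linear_combination (a * b - 1) * h1
  rw [prod_congr rfl this, prod_mul_distrib, h, prod_const, card_range, hev.neg_one_pow, one_mul, hm]
  push_cast; ring

lemma aux_P_real (p m : ℕ) (hm : p = 2 * m + 1) (h4 : m % 4 = 2) (ζ : ℂ)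
    (hζ : ζ = Complex.exp (2 * Real.pi * Complex.I / p)) :
    ∃ r : ℝ, 0 < r ∧ (∏ k ∈ range m, (ζ ^ (k + 1) - ζ ^ (p - (k + 1)))) = -(r : ℂ) := by
  refine ⟨∏ k ∈ range m, (2 * Real.sin (2 * Real.pi * (k + 1) / p)), ?_, ?_⟩
  · refine prod_pos fun k hk => ?_
    have hk := mem_range.1 hk
    have hp : (0 : ℝ) < p := by exact_mod_cast (by omega : 0 < p)
    refine mul_pos two_pos (Real.sin_pos_of_pos_of_lt_pi (by positivity) ?_)
    rw [div_lt_iff₀ hp]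
    have : (2 * (k + 1) : ℝ) < p := by exact_mod_cast (by omega : 2 * (k + 1) < p)
    nlinarith [Real.pi_pos]
  · have hpc : (p : ℂ) ≠ 0 := by exact_mod_cast (by omega : p ≠ 0)
    have : ∀ k ∈ range m, ζ ^ (k + 1) - ζ ^ (p - (k + 1)) = Complex.I * ((2 * Real.sin (2 * Real.pi * (k + 1) / p) : ℝ) : ℂ) := by
      intro k hk
      have hk := mem_range.1 hk
      have e1 : ζ ^ (k + 1) = Complex.exp ((2 * Real.pi * (k + 1) / p : ℂ) * Complex.I) := by
        rw [hζ, ← Complex.exp_nat_mul]; congr 1; push_cast; ring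
      have e2 : ζ ^ (p - (k + 1)) = Complex.exp (-(2 * Real.pi * (k + 1) / p : ℂ) * Complex.I) := by
        rw [hζ, ← Complex.exp_nat_mul, Nat.cast_sub (by omega)]
        refine Eq.trans ?_ (Complex.exp_periodic _)
        congr 1; push_cast; field_simp; ring
      rw [e1, e2]
      push_cast
      rw [Complex.exp_mul_I, Complex.exp_mul_I, Complex.cos_neg, Complex.sin_neg]
      ring
    rw [prod_congr rfl this, prod_mul_distrib, prod_const, card_range]
    have hI : Complex.I ^ m = -1 := by
      rw [← Nat.div_add_mod m 4, h4, pow_add, pow_mul, Complex.I_pow_four]; simp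
    rw [hI]; push_cast; ring

lemma aux_gauss_sq (p : ℕ) [Fact p.Prime] (hp8 : p % 8 = 5) (ζ : ℂ) (hζ : IsPrimitiveRoot ζ p) :
    (∑ j ∈ range p, ((legendreSym p j : ℤ) : ℂ) * ζ ^ j) ^ 2 = p := by
  have hψ := AddChar.zmodChar_primitive_of_primitive_root p hζ
  have hrc : ringChar (ZMod p) ≠ 2 := by rw [ZMod.ringChar_zmod_n]; omega
  have h := gaussSum_sq (χ := (quadraticChar (ZMod p)).ringHomComp (Int.castRingHom ℂ)) (by
      rw [Ne, MulChar.ringHomComp_eq_one_iff Int.cast_injective]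
      exact quadraticChar_ne_one hrc) ((quadraticChar_isQuadratic _).comp _) hψ
  have h1 : quadraticChar (ZMod p) (-1) = 1 := by
    rw [quadraticChar_one_iff_isSquare (by simp)]
    rw [ZMod.exists_sq_eq_neg_one_iff]; omega
  simp only [MulChar.ringHomComp_apply, h1, ZMod.card] at h
  simp only [map_one, one_mul] at h
  rw [← h]
  congr 1
  rw [gaussSum, ← aux_range]
  refine sum_congr rfl fun j _ => ?_
  rw [AddChar.zmodChar_apply', MulChar.ringHomComp_apply, legendreSym]
  simp

lemma aux_gauss_sign (p : ℕ) [Fact p.Prime] (hp8 : p % 8 = 5) (ζ : ℂ)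
    (hζ : ζ = Complex.exp (2 * Real.pi * Complex.I / p)) :
    ∑ j ∈ range p, ((legendreSym p j : ℤ) : ℂ) * ζ ^ j = (Real.sqrt p : ℂ) := by
  obtain ⟨m, hm⟩ : ∃ m, p = 2 * m + 1 := ⟨p / 2, by omega⟩
  have hpr : IsPrimitiveRoot ζ p := hζ ▸ Complex.isPrimitiveRoot_exp p (by omega)
  have hev : Even m := Nat.even_iff.2 (by omega)
  have h1 := aux_gauss_sq p hp8 ζ hpr
  have h2 := aux_P_sq p m hm hev ζ hpr
  obtain ⟨r, hr, hP⟩ := aux_P_real p m hm (by omega) ζ hζ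
  rcases sq_eq_sq_iff_eq_or_eq_neg.1 (h1.trans h2.symm) with h | h
  · exfalso
    have := aux_coeff p m hm ζ hpr (by omega) h
    rw [aux_two_pow p m hm hp8, aux_fact_sq p m hm hev] at this
    have h20 : (2 : ZMod p) = 0 := by linear_combination this
    have := aux_two_pow p m hm hp8
    rw [h20, zero_pow (by omega)] at this
    simp at this
  · rw [hP] at h h2
    rw [h, neg_neg]
    congr 1
    have : r ^ 2 = p := by
      rw [neg_sq] at h2; exact_mod_cast h2
    rw [← this, Real.sqrt_sq hr.le]

lemma aux_reindex (p : ℕ) [Fact p.Prime] (ι : ZMod p) (hι : IsPrimitiveRoot ι (p - 1))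
    {M : Type*} [AddCommMonoid M] (F : ZMod p → M) (hF : F 0 = 0) :
    ∑ x, F x = ∑ k ∈ range (p - 1), F (ι ^ k) := by
  have hp := (Fact.out : p.Prime).two_le
  have h0 : ι ≠ 0 := hι.ne_zero (by omega)
  symm
  rw [← sum_erase univ hF]
  refine sum_bij (fun k _ => ι ^ k) ?_ ?_ ?_ ?_
  · intro k _; simp [h0]
  · intro a ha b hb h; exact hι.pow_inj (mem_range.1 ha) (mem_range.1 hb) h
  · intro x hx
    have : NeZero (p - 1) := ⟨by omega⟩
    obtain ⟨i, hi, h⟩ := hι.eq_pow_of_pow_eq_one (ZMod.pow_card_sub_one_eq_one (by simpa using hx : x ≠ 0))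
    exact ⟨i, mem_range.2 hi, h⟩
  · simp

lemma aux_exists_char (p : ℕ) [Fact p.Prime] (hp8 : p % 8 = 5) (ι : ZMod p) (hι : IsPrimitiveRoot ι (p - 1)) :
    ∃ χ : MulChar (ZMod p) GaussianInt, χ ι = ⟨0, 1⟩ := by
  have hp := (Fact.out : p.Prime).two_le
  have h0 : ι ≠ 0 := hι.ne_zero (by omega)
  let u : GaussianIntˣ := ⟨⟨0, 1⟩, ⟨0, -1⟩, by ext <;> simp, by ext <;> simp⟩
  have hu4 : u ^ 4 = 1 := by
    ext <;> simp [u, pow_succ]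
  have hu : u ∈ rootsOfUnity (Fintype.card (ZMod p)ˣ) GaussianInt := by
    rw [mem_rootsOfUnity, ZMod.card_units, show p - 1 = 4 * ((p - 1) / 4) by omega, pow_mul, hu4, one_pow]
  have hg : ∀ x, x ∈ Subgroup.zpowers (Units.mk0 ι h0) := by
    intro x
    have : NeZero (p - 1) := ⟨by omega⟩
    obtain ⟨i, hi, h⟩ := hι.eq_pow_of_pow_eq_one (ZMod.pow_card_sub_one_eq_one (x.ne_zero))
    exact ⟨i, by ext; simpa using h⟩
  exact ⟨MulChar.ofRootOfUnity hu hg, MulChar.ofRootOfUnity_spec hu hg⟩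

-- Jacobi sum modulo p
lemma aux_jac_mod (p : ℕ) [Fact p.Prime] (hp8 : p % 8 = 5) (ι : ZMod p) (hι : IsPrimitiveRoot ι (p - 1))
    (χ : MulChar (ZMod p) GaussianInt) (hχ : χ ι = ⟨0, 1⟩) :
    ((jacobiSum χ χ).im : ZMod p) = (jacobiSum χ χ).re * ι ^ ((p - 1) / 4) := by
  set t := ι ^ ((p - 1) / 4) with ht
  have ht2 : t * t = ((-1 : ℤ) : ZMod p) := by
    have h1 : (t * t) ^ 2 = 1 := by
      rw [ht, ← pow_add, ← pow_mul, ← hι.pow_eq_one]; congr 1; omega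
    rcases sq_eq_one_iff.1 h1 with h | h
    · exfalso
      rw [ht, ← pow_add] at h
      have := hι.dvd_of_pow_eq_one _ h
      have := Nat.le_of_dvd (by omega) this
      omega
    · simp [h]
  let φ : GaussianInt →+* ZMod p := Zsqrtd.lift ⟨t, ht2⟩
  have hφ : ∀ x, φ (χ x) = x ^ ((p - 1) / 4) := by
    intro x
    by_cases hx : x = 0
    · subst hx; rw [MulChar.map_zero, zero_pow (by omega)]; simp
    · have : NeZero (p - 1) := ⟨by omega⟩
      obtain ⟨i, hi, rfl⟩ := hι.eq_pow_of_pow_eq_one (ZMod.pow_card_sub_one_eq_one hx)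
      rw [map_pow, map_pow, hχ]
      simp only [φ, Zsqrtd.lift_apply_apply]
      simp [ht, ← pow_mul, mul_comm]
  have h0 : φ (jacobiSum χ χ) = 0 := by
    rw [jacobiSum, map_sum]
    have := aux_sum_eval p (X ^ ((p - 1) / 4) * (1 - X) ^ ((p - 1) / 4)) (by
      refine le_trans (b := (p - 1) / 4 + (p - 1) / 4) (by compute_degree) (by omega))
    rw [coeff_eq_zero_of_natDegree_lt, neg_zero] at this
    · rw [← this]
      refine sum_congr rfl fun x _ => ?_
      simp [hφ]
    · refine lt_of_le_of_lt (b := (p - 1) / 4 + (p - 1) / 4) (by compute_degree) (by omega)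
  simp only [φ, Zsqrtd.lift_apply_apply] at h0
  push_cast at ht2
  linear_combination -t * h0 + ((jacobiSum χ χ).im : ZMod p) * ht2

lemma aux_sym {M : Type*} [CommRing M] (n : ℕ) (f : ℕ → M) (h : ∀ k < n, f (2 * n - k) = f k) :
    ∑ k ∈ range (2 * n + 1), f k = 2 * ∑ k ∈ range n, f k + f n := by
  rw [show 2 * n + 1 = (n + 1) + n by ring, sum_range_add, sum_range_succ]
  have : ∑ k ∈ range n, f (n + 1 + k) = ∑ k ∈ range n, f k := by
    rw [← sum_range_reflect]
    refine sum_congr rfl fun k hk => ?_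
    have hk := mem_range.1 hk
    rw [← h k hk]; congr 1; omega
  rw [this]; ring

lemma aux_jac_two (p : ℕ) [Fact p.Prime] (hp8 : p % 8 = 5) (ι : ZMod p) (hι : IsPrimitiveRoot ι (p - 1))
    (χ : MulChar (ZMod p) GaussianInt) (hχ : χ ι = ⟨0, 1⟩) :
    ∃ T : GaussianInt, jacobiSum χ χ = 2 * T - 1 ∧ (T.re + T.im) % 2 = 1 := by
  have : NeZero (p - 1) := ⟨by omega⟩
  obtain ⟨n, hn⟩ : ∃ n, p + 1 = 2 * n := ⟨(p + 1) / 2, by omega⟩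
  have hpz : (p : ZMod p) = 0 := by simp
  have hn2 : (2 : ZMod p) * n = 1 := by
    have : ((p + 1 : ℕ) : ZMod p) = ((2 * n : ℕ) : ZMod p) := by rw [hn]
    push_cast at this; rw [← this]; simp
  have hns : ¬ IsSquare (2 : ZMod p) := by
    rw [ZMod.exists_sq_eq_two_iff (by omega)]; omega
  let f : ℕ → GaussianInt := fun k => χ (k : ZMod p) * χ (1 - (k : ZMod p))
  have hJ : jacobiSum χ χ = ∑ k ∈ range (2 * n + 1), f k := by
    rw [jacobiSum, ← aux_range p (fun x => χ x * χ (1 - x)), show 2 * n + 1 = p + 1 + 1 by omega, sum_range_succ, sum_range_succ]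
    simp [f, MulChar.map_zero]
  rw [aux_sym] at hJ
  · refine ⟨∑ k ∈ range n, f k, ?_, ?_⟩
    · rw [hJ]
      have : f n = -1 := by
        have e : (1 - (n : ZMod p)) = n := by linear_combination -hn2
        simp only [f, e]
        have h2 : χ 2 * χ 2 = -1 := by
          have h20 : (2 : ZMod p) ≠ 0 := fun h => hns (h ▸ ⟨0, by simp⟩)
          obtain ⟨i, hi, h⟩ := hι.eq_pow_of_pow_eq_one (ZMod.pow_card_sub_one_eq_one h20)
          have hodd : Odd i := by
            by_contra hc
            rw [Nat.not_odd_iff_even] at hc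
            exact hns (h ▸ hc.isSquare_pow ι)
          rw [← h, map_pow, hχ, ← mul_pow]
          have : (⟨0, 1⟩ * ⟨0, 1⟩ : GaussianInt) = -1 := by ext <;> simp
          rw [this, hodd.neg_one_pow]
        have h3 : χ 2 * χ n = 1 := by rw [← map_mul, hn2, map_one]
        linear_combination (χ n * χ n) * h2 - (χ 2 * χ n + 1) * h3
      rw [this]; ring
    · let φ : GaussianInt →+* ZMod 2 := Zsqrtd.lift ⟨1, by decide⟩
      have hφ : ∀ x : ZMod p, x ≠ 0 → φ (χ x) = 1 := by
        intro x hx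
        obtain ⟨i, hi, rfl⟩ := hι.eq_pow_of_pow_eq_one (ZMod.pow_card_sub_one_eq_one hx)
        rw [map_pow, map_pow, hχ]
        simp [φ, Zsqrtd.lift_apply_apply]
      have hs : φ (∑ k ∈ range n, f k) = 1 := by
        obtain ⟨r, hr⟩ : ∃ r, n = r + 2 := ⟨n - 2, by omega⟩
        rw [hr, map_sum, sum_range_succ', sum_range_succ']
        have : ∀ k ∈ range r, φ (f (k + 1 + 1)) = 1 := by
          intro k hk
          have hk := mem_range.1 hk
          simp only [f, map_mul]
          rw [hφ, hφ, one_mul]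
          · rw [show (1 - ((k + 1 + 1 : ℕ) : ZMod p)) = - ((k + 1 : ℕ) : ZMod p) by push_cast; ring, neg_ne_zero, Ne, ZMod.natCast_eq_zero_iff]
            intro hd; have := Nat.le_of_dvd (by omega) hd; omega
          · rw [Ne, ZMod.natCast_eq_zero_iff]
            intro hd; have := Nat.le_of_dvd (by omega) hd; omega
        rw [sum_congr rfl this]
        have hr1 : ((r : ℕ) : ZMod 2) = 1 := by
          rw [← Nat.cast_one, ZMod.natCast_eq_natCast_iff]; unfold Nat.ModEq; omega
        simp [f, hr1, MulChar.map_zero]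
      simp only [φ, Zsqrtd.lift_apply_apply, mul_one] at hs
      generalize (∑ k ∈ range n, f k) = T at hs
      have hs2 : ((T.re + T.im : ℤ) : ZMod 2) = ((1 : ℤ) : ZMod 2) := by push_cast; exact hs
      exact (ZMod.intCast_eq_intCast_iff _ _ _).1 hs2
  · intro k hk
    simp only [f]
    have : ((2 * n - k : ℕ) : ZMod p) = 1 - k := by
      rw [Nat.cast_sub (by omega)]; push_cast; rw [hn2]
    rw [this, sub_sub_cancel, mul_comm]

lemma aux_unique (p : ℕ) [Fact p.Prime] (A B a b : ℤ) (t : ZMod p) (h1 : (p : ℤ) = A ^ 2 + B ^ 2)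
    (h2 : (p : ℤ) = a ^ 2 + b ^ 2) (hA : A % 4 = 3) (ha : a % 4 = 3) (hb : b % 2 = 0) (hp : p % 2 = 1)
    (hB : (B : ZMod p) = A * t) (hb' : (b : ZMod p) = a * t) : A = a ∧ B = b := by
  have hp0 : (0 : ℤ) < p := by exact_mod_cast (Fact.out : p.Prime).pos
  have hd : (p : ℤ) ∣ A * b - a * B := by
    rw [← ZMod.intCast_zmod_eq_zero_iff_dvd]
    push_cast; rw [hB, hb']; ring
  obtain ⟨c, hc⟩ := hd
  have hid : (A * b - a * B) ^ 2 + (A * a + B * b) ^ 2 = (p : ℤ) ^ 2 := by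
    rw [sq (p : ℤ)]; nth_rewrite 1 [h1]; rw [h2]; ring
  have hodd : (A * a + B * b) % 2 = 1 := by
    have e1 : A % 2 = 1 := by omega
    have e2 : a % 2 = 1 := by omega
    simp [Int.add_emod, Int.mul_emod, e1, e2, hb]
  have hne : A * a + B * b ≠ 0 := by intro h; rw [h] at hodd; simp at hodd
  have hc0 : c = 0 := by
    rw [hc] at hid
    have hpos : 0 < (A * a + B * b) ^ 2 := by positivity
    have : c ^ 2 < 1 := by
      by_contra hcc
      push Not at hcc
      nlinarith [mul_le_mul_of_nonneg_left hcc (sq_nonneg (p : ℤ))]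
    have : c ^ 2 = 0 := by nlinarith [sq_nonneg c]
    simpa using this
  rw [hc0, mul_zero] at hc
  -- A b = a B
  have hAa : A ^ 2 = a ^ 2 := by
    have : (p : ℤ) * (A ^ 2 - a ^ 2) = 0 := by
      have : (p : ℤ) * A ^ 2 - p * a ^ 2 = 0 := by
        nth_rewrite 1 [h2]; rw [h1]; linear_combination (A * b + a * B) * hc
      linear_combination this
    rcases mul_eq_zero.1 this with h | h
    · omega
    · linarith
  have hAeq : A = a := by
    rcases sq_eq_sq_iff_eq_or_eq_neg.1 hAa with h | h
    · exact h
    · omega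
  refine ⟨hAeq, ?_⟩
  subst hAeq
  have hA0 : A ≠ 0 := by rintro rfl; simp at hA
  have : A * (b - B) = 0 := by linear_combination hc
  rcases mul_eq_zero.1 this with h | h
  · exact absurd h hA0
  · linarith

lemma aux_gauss_expand (p : ℕ) [Fact p.Prime] (ι : ℕ) (hι : IsPrimitiveRoot (ι : ZMod p) (p - 1)) (ζ : ℂ)
    (hζ : ζ ^ p = 1) (χ : MulChar (ZMod p) ℂ) :
    gaussSum χ (AddChar.zmodChar p hζ) = ∑ k ∈ range (p - 1), (χ ι) ^ k * ζ ^ (ι ^ k) := by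
  rw [gaussSum, aux_reindex p (ι : ZMod p) hι _ (by simp [MulChar.map_zero])]
  refine sum_congr rfl fun k _ => ?_
  rw [map_pow, ← Nat.cast_pow, AddChar.zmodChar_apply']

lemma aux_split (N : ℕ) (w : ℂ) (hw : w ^ 4 = 1) (f : ℕ → ℂ) (S : ℕ → ℂ)
    (hS : ∀ j, S j = ∑ k ∈ (range N).filter (fun k => k % 4 = j), f k) :
    ∑ k ∈ range N, w ^ k * f k = S 0 + w * S 1 + w ^ 2 * S 2 + w ^ 3 * S 3 := by
  simp only [hS, sum_filter, mul_sum, ← sum_add_distrib]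
  refine sum_congr rfl fun k _ => ?_
  have : w ^ k = w ^ (k % 4) := by
    conv_lhs => rw [← Nat.div_add_mod k 4, pow_add, pow_mul, hw, one_pow, one_mul]
  rw [this]
  have : k % 4 < 4 := Nat.mod_lt _ (by norm_num)
  interval_cases k % 4 <;> simp

theorem stmt_16 (p : ℕ) (hp : p.Prime) (hp8 : p % 8 = 5)
    (ι : ℕ) (hι : IsPrimitiveRoot ((ι : ℕ) : ZMod p) (p - 1))
    (A B : ℤ) (hAB : (p : ℤ) = A ^ 2 + B ^ 2)
    (hA : A ≡ -1 [ZMOD 4])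
    (hB : B ≡ A * (ι : ℤ) ^ ((p - 1) / 4) [ZMOD (p : ℤ)])
    (ζ : ℂ) (hζ : ζ = Complex.exp (2 * Real.pi * Complex.I / p))
    (S : ℕ → ℂ)
    (hS : ∀ j, S j = ∑ k ∈ (Finset.range (p - 1)).filter (fun k => k % 4 = j),
      ζ ^ (ι ^ k)) :
    (S 0 - S 2) ^ 2 = ((A : ℂ) * Real.sqrt p - (p : ℂ)) / 2 ∧
    (S 1 - S 3) ^ 2 = -(((A : ℂ) * Real.sqrt p + (p : ℂ)) / 2) ∧
    (S 0 - S 2) * (S 1 - S 3) = (B : ℂ) * Real.sqrt p / 2 := by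
  have : Fact p.Prime := ⟨hp⟩
  have hp2 := hp.two_le
  have hpr : IsPrimitiveRoot ζ p := hζ ▸ Complex.isPrimitiveRoot_exp p (by omega)
  have hψ := AddChar.zmodChar_primitive_of_primitive_root p hpr
  have hζ1 : ζ ^ p = 1 := hpr.pow_eq_one
  set ψ := AddChar.zmodChar p hζ1 with hψdef
  obtain ⟨χ, hχ⟩ := aux_exists_char p hp8 _ hι
  have hmod := aux_jac_mod p hp8 _ hι χ hχ
  obtain ⟨T, hT, hTodd⟩ := aux_jac_two p hp8 _ hι χ hχ
  set c := χ.ringHomComp GaussianInt.toComplex with hc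
  have hcι : c ι = Complex.I := by
    rw [hc, MulChar.ringHomComp_apply, hχ, GaussianInt.toComplex_def']; simp
  have hhalf : (ι : ZMod p) ^ ((p - 1) / 2) = -1 := by
    have h1 : ((ι : ZMod p) ^ ((p - 1) / 2)) ^ 2 = 1 := by
      rw [← pow_mul, ← hι.pow_eq_one]; congr 1; omega
    rcases sq_eq_one_iff.1 h1 with h | h
    · exfalso
      have := Nat.le_of_dvd (by omega) (hι.dvd_of_pow_eq_one _ h)
      omega
    · exact h
  have hcneg : c (-1) = -1 := by
    rw [← hhalf, map_pow, hcι, show (p - 1) / 2 = 4 * ((p - 1) / 8) + 2 by omega, pow_add, pow_mul, Complex.I_pow_four]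
    simp
  have hne1 : c ≠ 1 := by
    intro h
    rw [h, MulChar.one_apply (by simp)] at hcneg
    norm_num at hcneg
  have hne2 : c * c ≠ 1 := by
    intro h
    have := congrArg (fun f : MulChar (ZMod p) ℂ => f ι) h
    simp only [MulChar.mul_apply, hcι, Complex.I_mul_I] at this
    rw [MulChar.one_apply (hι.isUnit (by omega))] at this
    norm_num at this
  have hinv : c⁻¹ ι = -Complex.I := by
    rw [← MulChar.star_apply', hcι]; simp
  -- Gauss sums
  have hG : gaussSum c ψ = (S 0 - S 2) + Complex.I * (S 1 - S 3) := by
    rw [aux_gauss_expand p ι hι, hcι, aux_split _ _ Complex.I_pow_four _ S hS, Complex.I_sq, Complex.I_pow_three]; ring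
  have hG' : gaussSum c⁻¹ ψ = (S 0 - S 2) - Complex.I * (S 1 - S 3) := by
    rw [aux_gauss_expand p ι hι, hinv, aux_split _ _ (by rw [neg_pow, Complex.I_pow_four]; norm_num) _ S hS, neg_sq, Complex.I_sq, neg_pow Complex.I 3, Complex.I_pow_three]; ring
  have hprod : gaussSum c ψ * gaussSum c⁻¹ ψ = -p := by
    have h1 := gaussSum_mul_gaussSum_eq_card hne1 hψ
    rw [ZMod.card] at h1
    have h2 := mul_gaussSum_inv_eq_gaussSum c⁻¹ ψ
    rw [← MulChar.star_apply', hcneg] at h2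
    rw [← h2, ← h1]; simp [hψdef]
  have hquad : gaussSum (c * c) ψ = (Real.sqrt p : ℂ) := by
    rw [← aux_gauss_sign p hp8 ζ hζ]
    have e : ∑ j ∈ range p, ((legendreSym p j : ℤ) : ℂ) * ζ ^ j =
        gaussSum ((quadraticChar (ZMod p)).ringHomComp (Int.castRingHom ℂ)) ψ := by
      rw [gaussSum, ← aux_range]
      refine sum_congr rfl fun j _ => ?_
      rw [hψdef, AddChar.zmodChar_apply', MulChar.ringHomComp_apply, legendreSym]
      simp
    rw [e, aux_gauss_expand p ι hι, aux_gauss_expand p ι hι]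
    have hq : quadraticChar (ZMod p) (ι : ZMod p) = -1 := by
      rw [quadraticChar_neg_one_iff_not_isSquare]
      rintro ⟨y, hy⟩
      have hy0 : y ≠ 0 := by
        rintro rfl
        exact hι.ne_zero (by omega) (by simpa using hy)
      rw [hy, ← sq, ← pow_mul, show 2 * ((p - 1) / 2) = p - 1 by omega, ZMod.pow_card_sub_one_eq_one hy0] at hhalf
      have h2 : (2 : ZMod p) = 0 := by linear_combination hhalf
      have h3 : ((2 : ℕ) : ZMod p) = 0 := by exact_mod_cast h2
      rw [ZMod.natCast_eq_zero_iff] at h3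
      have := Nat.le_of_dvd (by norm_num) h3
      omega
    rw [MulChar.ringHomComp_apply, hq, MulChar.mul_apply, hcι, Complex.I_mul_I]
    simp
  have hJ := jacobiSum_mul_nontrivial hne2 ψ
  have hJc : jacobiSum c c = GaussianInt.toComplex (jacobiSum χ χ) := jacobiSum_ringHomComp χ χ _
  set a := (jacobiSum χ χ).re with ha
  set b := (jacobiSum χ χ).im with hb
  rw [hquad, hJc, GaussianInt.toComplex_def, ← ha, ← hb] at hJ
  have h2 : jacobiSum c⁻¹ c⁻¹ = (starRingEnd ℂ) (jacobiSum c c) := by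
    rw [← MulChar.star_eq_inv]
    exact jacobiSum_ringHomComp c c (starRingEnd ℂ)
  rw [hJc, GaussianInt.toComplex_def, ← ha, ← hb] at h2
  simp only [map_add, map_mul, Complex.conj_I, map_intCast] at h2
  -- norm
  have hnorm : (p : ℤ) = a ^ 2 + b ^ 2 := by
    have h1 := jacobiSum_mul_jacobiSum_inv (F := ZMod p) (F' := ℂ) (by
      rw [ZMod.ringChar_zmod_n, ringChar.eq_zero]; omega) hne1 hne1 hne2
    rw [h2, hJc, GaussianInt.toComplex_def, ← ha, ← hb, ZMod.card] at h1
    have h3 : ((p : ℤ) : ℂ) = ((a ^ 2 + b ^ 2 : ℤ) : ℂ) := by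
      push_cast; rw [← h1]; linear_combination (-(b : ℂ) ^ 2) * Complex.I_sq
    exact_mod_cast h3
  have haT : a = 2 * T.re - 1 := by rw [ha, hT]; simp
  have hbT : b = 2 * T.im := by rw [hb, hT]; simp
  have ha4 : a % 4 = 3 := by
    have hp8' : (p : ℤ) % 8 = 5 := by exact_mod_cast hp8
    rcases Int.even_or_odd T.im with ⟨s, hs⟩ | ⟨s, hs⟩
    · exfalso
      have : T.re % 2 = 1 := by omega
      obtain ⟨r, hr⟩ : ∃ r, T.re = 2 * r + 1 := ⟨T.re / 2, by omega⟩
      rw [haT, hbT, hs, hr] at hnorm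
      have : (p : ℤ) = 8 * (2 * r ^ 2 + r + 2 * s ^ 2) + 1 := by rw [hnorm]; ring
      omega
    · omega
  have hAB' := aux_unique p A B a b ((ι : ZMod p) ^ ((p - 1) / 4)) hAB hnorm
    (by unfold Int.ModEq at hA; omega) ha4 (by omega) (by omega)
    (by have := (ZMod.intCast_eq_intCast_iff _ _ _).2 hB; push_cast at this; exact this) hmod
  have hconj : ((Real.sqrt p : ℂ)) * (a + b * -Complex.I) = gaussSum c⁻¹ ψ * gaussSum c⁻¹ ψ := by
    have h := jacobiSum_mul_nontrivial (χ := c⁻¹) (φ := c⁻¹)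
      (by rw [← mul_inv]; exact inv_ne_one.2 hne2) ψ
    have e : gaussSum (c⁻¹ * c⁻¹) ψ = gaussSum (c * c) ψ := by
      rw [aux_gauss_expand p ι hι, aux_gauss_expand p ι hι, MulChar.mul_apply, MulChar.mul_apply,
        hinv, hcι, neg_mul_neg]
    rw [e, hquad, h2] at h
    exact h
  rw [hG] at hJ hprod
  rw [hG'] at hconj hprod
  rw [← hAB'.1, ← hAB'.2] at hJ hconj
  have hI := Complex.I_sq
  generalize S 0 - S 2 = x at *
  generalize S 1 - S 3 = y at *
  refine ⟨?_, ?_, ?_⟩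
  · linear_combination (-1 / 4) * (hJ + hconj) + hprod / 2
  · linear_combination (1 / 4) * (hJ + hconj) + hprod / 2 + y ^ 2 * hI
  · linear_combination (Complex.I / 4) * (hJ - hconj) - ((Real.sqrt p : ℂ) * B / 2 - x * y) * hI
end
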